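/- arXiv:2508.02249 — 7 statements merged into one kernel-verified Lean document; each statement's English description precedes it below -/
import Mathlib

section
/- Let Δ ≥ 1 be an integer and let A ∈ ℤ^{m×n} be a Δ-modular matrix of full column rank. If n ≥ ⌈(Δ−1)/2⌉·(Δ−1) + 1, then there exists a nonzero integer vector z ∈ ℤ^n with ‖Az‖_∞ = 1; in particular, the minimum of ‖Az‖_∞ over all nonzero z ∈ ℤ^n equals 1. -/
/-!
Let `B` be an `n × n` submatrix of `A` with `|det B| = Δ`. The group `G = ℤⁿ / Bℤⁿ` has order `Δ`,
so for `n` large there are a class `g`, signs `ε` and a set `J` of `ord g` indices with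
`εⱼeⱼ ∈ g` for all `j ∈ J`; then `Bℤⁿ` contains all differences `εᵢeᵢ - εⱼeⱼ` and the sum
`∑ⱼ εⱼeⱼ` over `J`. After flipping signs of the rows of `B` we may take `ε = 1`. Writing the
rows `a` of `±A` as `a = wB`, maximality of `|det B|` says that all `n × n` determinants formed from
the coordinate vectors `w` are at most `1` in absolute value, and `⟨a, z⟩ = ⟨w, Bz⟩`.

If no difference `eᵢ - eⱼ` gives a short vector, then for all `i ≠ j` in `J` some `w` has
`wᵢ - wⱼ ≥ 2`, that is `wᵢ = 1` and `wⱼ = -1`. Two-by-two determinants then force `|wᵢ + wⱼ| ≤ 1`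
for every `w`, so those special `w` vanish on the rest of `J`. Fixing `i`, they form a star of
vectors agreeing with `eᵢ - eⱼ` on `J`, and one more determinant bounds `|∑ⱼ wⱼ|` by `1` for
every `w`.
-/

open Matrix
open scoped Pointwise

variable {ι κ : Type*} [Fintype κ]

section Determinants

variable [DecidableEq κ] {S : Type*} [CommRing S]

theorem det_updateRow_of_mulVec_eq_single {E : Matrix κ κ S} {v : κ → S} {c : κ}
    (hv : E *ᵥ v = Pi.single c 1) (w : κ → S) :
    (E.updateRow c w).det = E.det * (w ⬝ᵥ v) := by
  calc (E.updateRow c w).det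
      = w ⬝ᵥ E.adjugate *ᵥ Pi.single c 1 := by
        rw [← cramer_transpose_apply, cramer_eq_adjugate_mulVec, ← adjugate_transpose,
          mulVec_transpose, mulVec_single_one]
        rfl
    _ = E.det * (w ⬝ᵥ v) := by
        rw [← hv, mulVec_mulVec, adjugate_mul, smul_mulVec, one_mulVec, dotProduct_smul,
          smul_eq_mul]

theorem abs_det_eq_one_of_neg_one_block [LinearOrder S] [IsStrictOrderedRing S]
    {E : Matrix κ κ S} (p : κ → Prop)
    (hp : ∀ i, p i → ∀ j, p j → E i j = (-1 : Matrix κ κ S) i j)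
    (hnp : ∀ i, ¬p i → E i = Pi.single i 1) : |E.det| = 1 := by
  classical
  have hneg : E.toSquareBlockProp p = -1 := by
    ext i j
    simp only [toSquareBlockProp_def, of_apply, hp i i.2 j j.2, Matrix.neg_apply, one_apply,
      Subtype.ext_iff]
  have hone : E.toSquareBlockProp (¬p ·) = 1 := by
    ext i j
    simp only [toSquareBlockProp_def, of_apply, hnp i i.2, ← one_eq_pi_single, one_apply,
      Subtype.ext_iff]
  have hdet : E.det = (-1) ^ Fintype.card {i // p i} := by
    rw [E.twoBlockTriangular_det p, hneg, hone, det_neg, det_one, det_one, mul_one, mul_one]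
    intro i hi j hj
    have hji : j ≠ i := ne_of_apply_ne p fun h => hi (h ▸ hj)
    rw [hnp i hi, Pi.single_eq_of_ne hji]
  rw [hdet, abs_neg_one_pow]

theorem exists_abs_det_eq_one_of_star [LinearOrder S] [IsStrictOrderedRing S] {R : Set (κ → S)}
    (hunit : ∀ i, Pi.single i 1 ∈ R) {J : Finset κ} {c : κ} (hc : c ∈ J)
    (hstar : ∀ i ∈ J, i ≠ c → ∃ u ∈ R, ∀ j ∈ J, u j = (Pi.single c 1 - Pi.single i 1 : κ → S) j) :
    ∃ E : Matrix κ κ S, (∀ i, E i ∈ R) ∧ |E.det| = 1 ∧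
      E *ᵥ (fun j => if j ∈ J then 1 else 0) = Pi.single c 1 := by
  choose! u huR hu using hstar
  let E : Matrix κ κ S := fun i => if i ∈ J.erase c then u i else Pi.single i 1
  have hE_star : ∀ i ∈ J.erase c, E i = u i := fun i hi => if_pos hi
  have hE_unit : ∀ i ∉ J.erase c, E i = Pi.single i 1 := fun i hi => if_neg hi
  have hER : ∀ i, E i ∈ R := by
    intro i
    by_cases hi : i ∈ J.erase c
    · rw [hE_star i hi]
      exact huR i (Finset.mem_of_mem_erase hi) (Finset.ne_of_mem_erase hi)
    · exact hE_unit i hi ▸ hunit i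
  have hEv : E *ᵥ (fun j => if j ∈ J then 1 else 0) = Pi.single c 1 := by
    ext i
    by_cases hi : i ∈ J.erase c
    · obtain ⟨hic, hiJ⟩ := Finset.mem_erase.mp hi
      calc E i ⬝ᵥ (fun j => if j ∈ J then 1 else 0)
          = ∑ j ∈ J, u i j := by simp [hE_star i hi, dotProduct]
        _ = ∑ j ∈ J, (Pi.single c 1 - Pi.single i 1 : κ → S) j :=
            Finset.sum_congr rfl (hu i hiJ hic)
        _ = (Pi.single c 1 : κ → S) i := by simp [hc, hiJ, hic]
    · have hiJ : i ∈ J ↔ i = c := ⟨fun hiJ => by simpa [hiJ] using hi, fun h => h ▸ hc⟩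
      rw [mulVec, hE_unit i hi, single_one_dotProduct, Pi.single_apply]
      simp only [hiJ]
  have hEdet : |E.det| = 1 := by
    refine abs_det_eq_one_of_neg_one_block (· ∈ J.erase c) (fun i hi j hj => ?_) hE_unit
    obtain ⟨hic, hiJ⟩ := Finset.mem_erase.mp hi
    obtain ⟨hjc, hjJ⟩ := Finset.mem_erase.mp hj
    rw [hE_star i hi, hu i hiJ hic j hjJ]
    simp [hjc, one_apply, Pi.single_apply, eq_comm]
  exact ⟨E, hER, hEdet, hEv⟩

end Determinants

/-- Every square matrix with rows in `R` has determinant at most `δ` in absolute value. This is the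
upper bound in `δ`-modularity, as a property of the set of rows. -/
def DetBounded [DecidableEq κ] {S : Type*} [CommRing S] [LinearOrder S] (R : Set (κ → S))
    (δ : S) : Prop :=
  ∀ D : Matrix κ κ S, (∀ i, D i ∈ R) → |D.det| ≤ δ

namespace DetBounded

variable [DecidableEq κ] {S : Type*} [CommRing S] [LinearOrder S] [IsStrictOrderedRing S]
  {R : Set (κ → S)} {δ : S}

theorem range_of_injective {A : Matrix ι κ S} (hδ : 0 ≤ δ)
    (hA : ∀ f : κ → ι, Function.Injective f → |(A.submatrix f id).det| ≤ δ) :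
    DetBounded (Set.range A) δ := by
  intro D hD
  choose f hf using hD
  obtain rfl : A.submatrix f id = D := funext hf
  by_cases hinj : Function.Injective f
  · exact hA f hinj
  · obtain ⟨i, j, hij, hne⟩ := Function.not_injective_iff.mp hinj
    rw [det_zero_of_row_eq hne (by ext; simp [hij]), abs_zero]
    exact hδ

theorem union_neg (hR : DetBounded R δ) : DetBounded (R ∪ -R) δ := by
  intro D hD
  have hsign : ∀ i, ∃ s : S, |s| = 1 ∧ s • D i ∈ R := fun i =>
    (hD i).elim (fun h => ⟨1, by simp, by simpa using h⟩) fun h => ⟨-1, by simp, by simpa using h⟩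
  choose s hs hsR using hsign
  have hdet := hR (diagonal s * D) fun i => by
    convert hsR i using 1
    ext j
    simp
  simpa [abs_mul, Finset.abs_prod, hs] using hdet

theorem abs_dotProduct_le (hR : DetBounded R δ) {E : Matrix κ κ S} (hER : ∀ i, E i ∈ R)
    (hEdet : |E.det| = 1) {v : κ → S} {c : κ} (hEv : E *ᵥ v = Pi.single c 1) {w : κ → S}
    (hw : w ∈ R) : |w ⬝ᵥ v| ≤ δ := by
  have hrows : ∀ i, E.updateRow c w i ∈ R := by
    intro i
    obtain rfl | hic := eq_or_ne i c
    · rwa [updateRow_self]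
    · rw [updateRow_ne hic]
      exact hER i
  simpa [det_updateRow_of_mulVec_eq_single hEv, abs_mul, hEdet] using hR _ hrows

theorem abs_sum_le_of_star (hR : DetBounded R δ) (hunit : ∀ i, Pi.single i 1 ∈ R)
    {J : Finset κ} {c : κ} (hc : c ∈ J)
    (hstar : ∀ i ∈ J, i ≠ c → ∃ u ∈ R, ∀ j ∈ J, u j = (Pi.single c 1 - Pi.single i 1 : κ → S) j)
    {w : κ → S} (hw : w ∈ R) : |∑ j ∈ J, w j| ≤ δ := by
  obtain ⟨E, hER, hEdet, hEv⟩ := exists_abs_det_eq_one_of_star hunit hc hstar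
  simpa [dotProduct] using hR.abs_dotProduct_le hER hEdet hEv hw

theorem abs_apply_le (hR : DetBounded R δ) (hunit : ∀ i, Pi.single i 1 ∈ R) {w : κ → S}
    (hw : w ∈ R) (i : κ) : |w i| ≤ δ := by
  simpa using hR.abs_sum_le_of_star hunit (Finset.mem_singleton_self i) (by simp) hw

theorem abs_add_le_of_edge (hR : DetBounded R δ) (hunit : ∀ i, Pi.single i 1 ∈ R) {i j : κ}
    (hij : i ≠ j) (hedge : ∃ u ∈ R, u i = 1 ∧ u j = -1) {w : κ → S} (hw : w ∈ R) :
    |w i + w j| ≤ δ := by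
  obtain ⟨u, huR, hui, huj⟩ := hedge
  rw [← Finset.sum_pair hij]
  refine hR.abs_sum_le_of_star hunit (Finset.mem_insert_self i {j}) ?_ hw
  intro k hk hki
  obtain rfl : k = j := by simpa [hki] using hk
  exact ⟨u, huR, by simp [hui, huj, hij, hki]⟩

theorem abs_sum_le_one_of_edges (hR : DetBounded R 1) (hunit : ∀ i, Pi.single i 1 ∈ R)
    {J : Finset κ} (hedge : ∀ i ∈ J, ∀ j ∈ J, i ≠ j → ∃ u ∈ R, u i = 1 ∧ u j = -1)
    {w : κ → S} (hw : w ∈ R) : |∑ j ∈ J, w j| ≤ 1 := by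
  obtain rfl | ⟨c, hc⟩ := J.eq_empty_or_nonempty
  · simp
  refine hR.abs_sum_le_of_star hunit hc (fun i hi hic => ?_) hw
  obtain ⟨u, huR, huc, hui⟩ := hedge c hc i hi hic.symm
  refine ⟨u, huR, fun k hk => ?_⟩
  obtain rfl | hkc := eq_or_ne k c
  · simp [huc, hic.symm]
  obtain rfl | hki := eq_or_ne k i
  · simp [hui, hkc]
  have hck := abs_le.mp (hR.abs_add_le_of_edge hunit hkc.symm (hedge c hc k hk hkc.symm) huR)
  have hik := abs_le.mp (hR.abs_add_le_of_edge hunit hki.symm (hedge i hi k hk hki.symm) huR)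
  have huk : u k = 0 := by linarith
  simp [huk, hkc, hki]

theorem exists_eq_one_and_eq_neg_one (hR : DetBounded R 1) (hunit : ∀ i, Pi.single i 1 ∈ R)
    (hneg : ∀ w ∈ R, -w ∈ R) {i j : κ} {w : κ → S} (hw : w ∈ R)
    (hint : w i - w j ∈ Set.range ((↑) : ℤ → S)) (hgt : 1 < |w i - w j|) :
    ∃ u ∈ R, u i = 1 ∧ u j = -1 := by
  have hi := abs_le.mp (hR.abs_apply_le hunit hw i)
  have hj := abs_le.mp (hR.abs_apply_le hunit hw j)
  have htwo : 2 ≤ |w i - w j| := by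
    obtain ⟨k, hk⟩ := hint
    rw [← hk] at hgt ⊢
    exact_mod_cast (show (1 : ℤ) < |k| by exact_mod_cast hgt)
  rcases le_abs.mp htwo with h | h
  · exact ⟨w, hw, by linarith, by linarith⟩
  · exact ⟨-w, hneg w hw, by simp only [Pi.neg_apply]; linarith,
      by simp only [Pi.neg_apply]; linarith⟩

theorem exists_abs_sub_le_one_or_abs_sum_le_one (hR : DetBounded R 1)
    (hunit : ∀ i, Pi.single i 1 ∈ R) (hneg : ∀ w ∈ R, -w ∈ R) {J : Finset κ}
    (hint : ∀ w ∈ R, ∀ i ∈ J, ∀ j ∈ J, w i - w j ∈ Set.range ((↑) : ℤ → S)) :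
    (∃ i ∈ J, ∃ j ∈ J, i ≠ j ∧ ∀ w ∈ R, |w i - w j| ≤ 1) ∨ ∀ w ∈ R, |∑ j ∈ J, w j| ≤ 1 := by
  refine or_iff_not_imp_left.mpr fun hpair w hw =>
    hR.abs_sum_le_one_of_edges hunit (fun i hi j hj hij => ?_) hw
  push Not at hpair
  obtain ⟨u, hu, hgt⟩ := hpair i hi j hj hij
  exact hR.exists_eq_one_and_eq_neg_one hunit hneg hu (hint u hu i hi j hj) hgt

end DetBounded

/-- The coordinate vectors, with respect to the rows of `B`, of the vectors in `R`. They are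
rational, since the rows of `B` need not span the integer lattice. -/
def rowCoords (B : Matrix κ κ ℤ) (R : Set (κ → ℤ)) : Set (κ → ℚ) :=
  {w | ∃ a ∈ R, w ᵥ* B.map (↑) = fun j => (a j : ℚ)}

section RowCoords

variable {B : Matrix κ κ ℤ} {R : Set (κ → ℤ)}

theorem neg_mem_rowCoords (hneg : ∀ a ∈ R, -a ∈ R) {w : κ → ℚ} (hw : w ∈ rowCoords B R) :
    -w ∈ rowCoords B R := by
  obtain ⟨a, ha, hwa⟩ := hw
  exact ⟨-a, hneg a ha, by ext j; simp [neg_vecMul, hwa]⟩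

theorem dotProduct_mulVec_of_vecMul_eq {w : κ → ℚ} {a : κ → ℤ}
    (hwa : w ᵥ* B.map (↑) = fun j => (a j : ℚ)) (z : κ → ℤ) :
    w ⬝ᵥ (fun i => ((B *ᵥ z) i : ℚ)) = ((a ⬝ᵥ z : ℤ) : ℚ) := by
  have hcast : (fun i => ((B *ᵥ z) i : ℚ)) = B.map (↑) *ᵥ fun j => (z j : ℚ) :=
    funext ((Int.castRingHom ℚ).map_mulVec B z)
  rw [hcast, dotProduct_mulVec, hwa]
  exact ((Int.castRingHom ℚ).map_dotProduct a z).symm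

theorem dotProduct_mem_range_intCast {w : κ → ℚ} (hw : w ∈ rowCoords B R) {v : κ → ℤ}
    (hv : v ∈ LinearMap.range B.mulVecLin) :
    w ⬝ᵥ (fun i => (v i : ℚ)) ∈ Set.range ((↑) : ℤ → ℚ) := by
  obtain ⟨a, -, hwa⟩ := hw
  obtain ⟨z, rfl⟩ := hv
  exact ⟨a ⬝ᵥ z, (dotProduct_mulVec_of_vecMul_eq hwa z).symm⟩

variable [DecidableEq κ]

theorem single_mem_rowCoords {i : κ} (hi : B i ∈ R) : Pi.single i 1 ∈ rowCoords B R :=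
  ⟨B i, hi, single_one_vecMul _ _⟩

theorem exists_mem_rowCoords (hB : B.det ≠ 0) {a : κ → ℤ} (ha : a ∈ R) :
    ∃ w ∈ rowCoords B R, w ᵥ* B.map (↑) = fun j => (a j : ℚ) := by
  have hunit : IsUnit (B.map (Int.cast : ℤ → ℚ)).det := by
    rw [← Int.cast_det]
    exact isUnit_iff_ne_zero.mpr (mod_cast hB)
  obtain ⟨w, hw⟩ := vecMul_surjective_iff_isUnit.mpr ((isUnit_iff_isUnit_det _).mpr hunit)
    fun j => (a j : ℚ)
  exact ⟨w, ⟨a, ha, hw⟩, hw⟩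

theorem DetBounded.rowCoords (hB : B.det ≠ 0) (hR : DetBounded R |B.det|) :
    DetBounded (rowCoords B R) 1 := by
  intro D hD
  choose a haR ha using hD
  have hprod : D * B.map (↑) = (of a).map (Int.cast : ℤ → ℚ) := funext ha
  have hdet : D.det * B.det = ((of a).det : ℚ) := by
    rw [Int.cast_det, Int.cast_det, ← det_mul, hprod]
  have hBpos : (0 : ℚ) < |(B.det : ℚ)| := abs_pos.mpr (mod_cast hB)
  refine le_of_mul_le_mul_right ?_ hBpos
  rw [← abs_mul, hdet, one_mul]
  exact_mod_cast hR (of a) haR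

theorem exists_abs_dotProduct_le_one_of_rowCoords (hB : B.det ≠ 0) {v : κ → ℤ} (hv0 : v ≠ 0)
    (hv : v ∈ LinearMap.range B.mulVecLin)
    (hle : ∀ w ∈ rowCoords B R, |w ⬝ᵥ (fun i => (v i : ℚ))| ≤ 1) :
    ∃ z : κ → ℤ, z ≠ 0 ∧ ∀ a ∈ R, |a ⬝ᵥ z| ≤ 1 := by
  obtain ⟨z, rfl⟩ := hv
  refine ⟨z, fun hz => hv0 (by simp [hz]), fun a ha => ?_⟩
  obtain ⟨w, hw, hwa⟩ := exists_mem_rowCoords hB ha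
  have hwz := hle w hw
  rw [mulVecLin_apply, dotProduct_mulVec_of_vecMul_eq hwa] at hwz
  exact_mod_cast hwz

theorem exists_abs_dotProduct_le_one_of_range (hB : B.det ≠ 0) (hR : DetBounded R |B.det|)
    (hneg : ∀ a ∈ R, -a ∈ R) (hBR : ∀ i, B i ∈ R) {J : Finset κ} (hJ : J.Nonempty)
    (hdiff : ∀ i ∈ J, ∀ j ∈ J, Pi.single i 1 - Pi.single j 1 ∈ LinearMap.range B.mulVecLin)
    (hsum : ∑ j ∈ J, Pi.single j 1 ∈ LinearMap.range B.mulVecLin) :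
    ∃ z : κ → ℤ, z ≠ 0 ∧ ∀ a ∈ R, |a ⬝ᵥ z| ≤ 1 := by
  have hsub : ∀ (w : κ → ℚ) i j,
      w ⬝ᵥ (fun k => ((Pi.single i 1 - Pi.single j 1 : κ → ℤ) k : ℚ)) = w i - w j := fun w i j => by
    simp [dotProduct, mul_sub, Pi.single_apply]
  have hsum_apply : ∀ w : κ → ℚ,
      w ⬝ᵥ (fun k => ((∑ j ∈ J, Pi.single j 1 : κ → ℤ) k : ℚ)) = ∑ j ∈ J, w j := fun w => by
    simp [dotProduct, Pi.single_apply]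
  have hint : ∀ w ∈ rowCoords B R, ∀ i ∈ J, ∀ j ∈ J,
      w i - w j ∈ Set.range ((↑) : ℤ → ℚ) := fun w hw i hi j hj =>
    hsub w i j ▸ dotProduct_mem_range_intCast hw (hdiff i hi j hj)
  rcases (hR.rowCoords hB).exists_abs_sub_le_one_or_abs_sum_le_one
    (fun i => single_mem_rowCoords (hBR i)) (fun _ => neg_mem_rowCoords hneg) hint with
    ⟨i, hi, j, hj, hij, hle⟩ | hle
  · refine exists_abs_dotProduct_le_one_of_rowCoords hB (fun h => ?_) (hdiff i hi j hj)
      fun w hw => (hsub w i j).symm ▸ hle w hw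
    simpa [hij] using congrFun h i
  · obtain ⟨c, hc⟩ := hJ
    refine exists_abs_dotProduct_le_one_of_rowCoords hB (fun h => ?_) hsum
      fun w hw => (hsum_apply w).symm ▸ hle w hw
    simpa [Pi.single_apply, hc] using congrFun h c

end RowCoords

section SignedClasses

variable {G : Type*} [AddCommGroup G] [Finite G]

theorem card_fiber_add_card_fiber_neg_le [DecidableEq G] (c : κ → G) (g : G)
    (hlt : Finset.card {i | c i = g ∨ c i = -g} < addOrderOf g) :
    Finset.card {i | c i = g} + Finset.card {i | c i = -g} ≤ max 2 (Nat.card G - 1) := by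
  classical
  by_cases hg : -g = g
  · have horder : addOrderOf g ≤ 2 :=
      addOrderOf_le_of_nsmul_eq_zero two_pos (by rw [two_nsmul, ← neg_eq_iff_add_eq_zero, hg])
    simp only [hg, or_self] at hlt ⊢
    omega
  · have hdisj : Disjoint ({i | c i = g} : Finset κ) ({i | c i = -g} : Finset κ) :=
      Finset.disjoint_filter.mpr fun i _ hi hi' => hg (hi'.symm.trans hi)
    rw [Finset.filter_or, Finset.card_union_of_disjoint hdisj] at hlt
    have horder : addOrderOf g ≤ Nat.card G := addOrderOf_le_card
    omega

theorem exists_addOrderOf_le_card_fiber [DecidableEq G] (c : κ → G)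
    (hcard : (Nat.card G - 1) * max 2 (Nat.card G - 1) < 2 * Fintype.card κ) :
    ∃ g, addOrderOf g ≤ Finset.card {i | c i = g ∨ c i = -g} := by
  have := Fintype.ofFinite G
  by_contra! hlt
  let N : G → ℕ := fun g => Finset.card {i | c i = g}
  have hN0 : N 0 = 0 := by simpa [N] using hlt 0
  have hN : ∑ g, N g = Fintype.card κ :=
    (Finset.card_eq_sum_card_fiberwise fun _ _ => Finset.mem_coe.mpr (Finset.mem_univ _)).symm
  refine hcard.not_ge ?_
  calc 2 * Fintype.card κ = ∑ g, (N g + N (-g)) := by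
        have hNneg : ∑ g, N (-g) = ∑ g, N g := Equiv.sum_comp (Equiv.neg G) N
        rw [Finset.sum_add_distrib, hNneg, hN, two_mul]
    _ = ∑ g ∈ Finset.univ.erase 0, (N g + N (-g)) :=
        (Finset.sum_erase _ (by simp [hN0])).symm
    _ ≤ (Finset.univ.erase (0 : G)).card • max 2 (Nat.card G - 1) :=
        Finset.sum_le_card_nsmul _ _ _ fun g _ => card_fiber_add_card_fiber_neg_le c g (hlt g)
    _ = (Nat.card G - 1) * max 2 (Nat.card G - 1) := by
        rw [Finset.card_erase_of_mem (Finset.mem_univ _), Finset.card_univ,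
          Nat.card_eq_fintype_card, smul_eq_mul]

theorem exists_signed_classes_eq_and_sum_eq_zero (c : κ → G)
    (hcard : (Nat.card G - 1) * max 2 (Nat.card G - 1) < 2 * Fintype.card κ) :
    ∃ (ε : κ → ℤˣ) (J : Finset κ), J.Nonempty ∧
      (∀ i ∈ J, ∀ j ∈ J, ε i • c i = ε j • c j) ∧ ∑ j ∈ J, ε j • c j = 0 := by
  classical
  obtain ⟨g, hg⟩ := exists_addOrderOf_le_card_fiber c hcard
  obtain ⟨J, hJsub, hJcard⟩ := Finset.exists_subset_card_eq hg
  let ε : κ → ℤˣ := fun i => if c i = g then 1 else -1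
  have hclass : ∀ i ∈ J, ε i • c i = g := by
    intro i hi
    by_cases hcg : c i = g
    · simp [ε, hcg]
    · have hneg : c i = -g := (Finset.mem_filter.mp (hJsub hi)).2.resolve_left hcg
      rw [show ε i = -1 from if_neg hcg, hneg, Units.neg_smul, one_smul, neg_neg]
  refine ⟨ε, J, ?_, fun i hi j hj => (hclass i hi).trans (hclass j hj).symm, ?_⟩
  · exact Finset.card_pos.mp (hJcard ▸ addOrderOf_pos g)
  · rw [Finset.sum_congr rfl hclass, Finset.sum_const, hJcard, addOrderOf_nsmul_eq_zero]

end SignedClasses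

section ColumnLattice

variable [DecidableEq κ]

theorem card_quotient_range_mulVecLin {B : Matrix κ κ ℤ} (hB : B.det ≠ 0) :
    Nat.card ((κ → ℤ) ⧸ LinearMap.range B.mulVecLin) = B.det.natAbs := by
  have hinj : Function.Injective B.mulVecLin :=
    (injective_iff_map_eq_zero _).mpr fun _ => eq_zero_of_mulVec_eq_zero hB
  rw [← Submodule.natAbs_det_equiv _ (LinearEquiv.ofInjective B.mulVecLin hinj),
    ← LinearMap.det_toLin' B]
  rfl

theorem exists_signed_singles_mem_range {B : Matrix κ κ ℤ} (hB : B.det ≠ 0)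
    (hcard : (B.det.natAbs - 1) * max 2 (B.det.natAbs - 1) < 2 * Fintype.card κ) :
    ∃ (ε : κ → ℤˣ) (J : Finset κ), J.Nonempty ∧
      (∀ i ∈ J, ∀ j ∈ J, ε i • Pi.single i 1 - ε j • Pi.single j 1 ∈
        LinearMap.range B.mulVecLin) ∧
      ∑ j ∈ J, ε j • Pi.single j 1 ∈ LinearMap.range B.mulVecLin := by
  rw [← card_quotient_range_mulVecLin hB] at hcard
  have : Finite ((κ → ℤ) ⧸ LinearMap.range B.mulVecLin) :=
    Nat.finite_of_card_ne_zero (by simpa [card_quotient_range_mulVecLin hB] using hB)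
  obtain ⟨ε, J, hJ, heq, hsum⟩ := exists_signed_classes_eq_and_sum_eq_zero
    (fun i => (LinearMap.range B.mulVecLin).mkQ (Pi.single i 1)) hcard
  refine ⟨ε, J, hJ, fun i hi j hj => ?_, ?_⟩
  · rw [← Submodule.ker_mkQ (LinearMap.range _), LinearMap.mem_ker, map_sub, sub_eq_zero]
    simpa only [Units.smul_def, map_smul] using heq i hi j hj
  · rw [← Submodule.ker_mkQ (LinearMap.range _), LinearMap.mem_ker, map_sum]
    simpa only [Units.smul_def, map_smul] using hsum

end ColumnLattice

section Threshold

variable [DecidableEq κ]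

theorem exists_one_le_abs_mulVec {A : Matrix ι κ ℤ} {b : κ → ι}
    (hb : (A.submatrix b id).det ≠ 0) {z : κ → ℤ} (hz : z ≠ 0) : ∃ i, 1 ≤ |(A *ᵥ z) i| := by
  by_contra! hlt
  exact hz (eq_zero_of_mulVec_eq_zero hb (funext fun i => Int.abs_lt_one_iff.mp (hlt (b i))))

theorem exists_abs_dotProduct_le_one {R : Set (κ → ℤ)} {B : Matrix κ κ ℤ} (hB : B.det ≠ 0)
    (hR : DetBounded R |B.det|) (hBR : ∀ i, B i ∈ R)
    (hcard : (B.det.natAbs - 1) * max 2 (B.det.natAbs - 1) < 2 * Fintype.card κ) :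
    ∃ z : κ → ℤ, z ≠ 0 ∧ ∀ a ∈ R, |a ⬝ᵥ z| ≤ 1 := by
  obtain ⟨ε, J, hJ, hdiff, hsum⟩ := exists_signed_singles_mem_range hB hcard
  let B' : Matrix κ κ ℤ := diagonal (fun i => (ε i : ℤ)) * B
  have hB' : |B'.det| = |B.det| := by
    simp [B', abs_mul, Finset.abs_prod, Int.isUnit_iff_abs_eq.mp (ε _).isUnit]
  have hB'R : ∀ i, B' i ∈ R ∪ -R := by
    intro i
    have hrow : B' i = (ε i : ℤ) • B i := by
      ext j
      simp [B']
    rcases Int.units_eq_one_or (ε i) with h | h <;> simp [hrow, h, hBR i]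
  have hflip : ∀ v ∈ LinearMap.range B.mulVecLin, ε • v ∈ LinearMap.range B'.mulVecLin := by
    rintro _ ⟨z, rfl⟩
    refine ⟨z, ?_⟩
    ext i
    simp [B', mulVec_diagonal, Units.smul_def]
  have hflip_single : ∀ i, ε • ε i • (Pi.single i 1 : κ → ℤ) = Pi.single i 1 := by
    intro i
    ext j
    obtain rfl | hj := eq_or_ne j i <;> simp [smul_smul, *]
  obtain ⟨z, hz, hle⟩ := exists_abs_dotProduct_le_one_of_range (B := B') (R := R ∪ -R) (J := J)
    (abs_ne_zero.mp (hB' ▸ abs_ne_zero.mpr hB)) (hB' ▸ hR.union_neg)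
    (fun a ha => by simpa [or_comm] using ha) hB'R hJ
    (fun i hi j hj => by
      simpa only [smul_sub, hflip_single] using hflip _ (hdiff i hi j hj))
    (by simpa only [Finset.smul_sum, hflip_single] using hflip _ hsum)
  exact ⟨z, hz, fun a ha => hle a (Or.inl ha)⟩

theorem shortest_vector_threshold_general {Δ : ℕ} (hΔ : 1 ≤ Δ) {A : Matrix ι κ ℤ}
    (hub : ∀ f : κ → ι, Function.Injective f → |(A.submatrix f id).det| ≤ (Δ : ℤ))
    (hattain : ∃ b : κ → ι, |(A.submatrix b id).det| = (Δ : ℤ))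
    (hcard : (Δ - 1) * max 2 (Δ - 1) < 2 * Fintype.card κ) :
    (∃ z : κ → ℤ, z ≠ 0 ∧ (∀ i, |(A *ᵥ z) i| ≤ 1) ∧ ∃ i, |(A *ᵥ z) i| = 1) ∧
      ∀ z : κ → ℤ, z ≠ 0 → ∃ i, 1 ≤ |(A *ᵥ z) i| := by
  obtain ⟨b, hb⟩ := hattain
  have hdet : (A.submatrix b id).det ≠ 0 := abs_pos.mp (hb ▸ mod_cast hΔ)
  have hnatAbs : (A.submatrix b id).det.natAbs = Δ := by
    rw [Int.abs_eq_natAbs] at hb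
    exact_mod_cast hb
  refine ⟨?_, fun z hz => exists_one_le_abs_mulVec hdet hz⟩
  have hrows : DetBounded (Set.range A) |(A.submatrix b id).det| :=
    hb ▸ DetBounded.range_of_injective (Int.natCast_nonneg Δ) hub
  obtain ⟨z, hz, hle⟩ :=
    exists_abs_dotProduct_le_one hdet hrows (fun i => ⟨b i, rfl⟩) (hnatAbs ▸ hcard)
  obtain ⟨i, hi⟩ := exists_one_le_abs_mulVec hdet hz
  exact ⟨z, hz, fun r => hle _ ⟨r, rfl⟩, i, le_antisymm (hle _ ⟨i, rfl⟩) hi⟩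

end Threshold

theorem mul_max_two_lt_two_mul {d n : ℕ} (hn : (d + 1) / 2 * d + 1 ≤ n) :
    d * max 2 d < 2 * n := by
  rcases le_total d 2 with hd | hd
  · rw [max_eq_left hd]
    interval_cases d <;> omega
  · rw [max_eq_right hd]
    have hhalf : d ≤ 2 * ((d + 1) / 2) := by omega
    nlinarith

/-- Let `Δ ≥ 1` and let `A ∈ ℤ^{m×n}` be a `Δ`-modular matrix of full
column rank (every `n×n` submatrix has `|det| ≤ Δ` and one attains `Δ`).
If `n ≥ ⌈(Δ−1)/2⌉·(Δ−1) + 1`, then there is a nonzero `z ∈ ℤ^n` with `‖Az‖_∞ = 1`;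
in particular the minimum of `‖Az‖_∞` over nonzero integer `z` equals `1`. -/
theorem shortest_vector_threshold (Δ m n : ℕ) (hΔ : 1 ≤ Δ)
    (A : Matrix (Fin m) (Fin n) ℤ)
    (hrank : A.rank = n)
    (hub : ∀ f : Fin n → Fin m, Function.Injective f →
      |(A.submatrix f id).det| ≤ (Δ : ℤ))
    (hattain : ∃ f : Fin n → Fin m, Function.Injective f ∧
      |(A.submatrix f id).det| = (Δ : ℤ))
    (hn : ((Δ - 1) + 1) / 2 * (Δ - 1) + 1 ≤ n) :
    (∃ z : Fin n → ℤ, z ≠ 0 ∧ (∀ i, |A.mulVec z i| ≤ 1) ∧ (∃ i, |A.mulVec z i| = 1)) ∧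
    (∀ z : Fin n → ℤ, z ≠ 0 → ∃ i, 1 ≤ |A.mulVec z i|) := by
  exact shortest_vector_threshold_general hΔ hub (hattain.imp fun _ => And.right)
    (by simpa only [Fintype.card_fin] using mul_max_two_lt_two_mul hn)
end

section
/- For every integer Δ ≥ 2 there exist m ∈ ℕ and a Δ-modular matrix A ∈ ℤ^{m×(Δ−1)} of full column rank such that ‖Az‖_∞ ≥ 2 for every nonzero integer vector z ∈ ℤ^{Δ−1}. (Consequently the threshold dimension below which shortest Δ-modular lattice vectors can have infinity norm at least 2 is itself at least Δ − 1.) -/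
/-!
Let `U` be the matrix of all differences `eᵤ - eᵥ` with `u`, `v` ranging over the `n` coordinates
and an extra root whose basis vector is `0`. It is totally unimodular, so multiplying it by the
matrix `B = I + J` (`J` all ones), of determinant `n + 1`, yields an `(n + 1)`-modular matrix `U B`.
If `‖U B z‖_∞ ≤ 1`, then the `n + 1` integers consisting of `0` (at the root) and the entries of
`B z` differ pairwise by at most `1`, while their sum `(n + 1) ∑ z` is divisible by their number.
This forces them to be all equal, hence `B z = 0` and `z = 0`. The theorem is the case `n = Δ - 1`.
-/

open scoped Matrix

section Determinant

variable {R : Type*} [CommRing R]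

lemma det_eq_zero_of_row_sums_eq_zero {n : Type*} [Fintype n] [DecidableEq n] [Nonempty n]
    {M : Matrix n n R} (hM : ∀ i, ∑ j, M i j = 0) : M.det = 0 := by
  have hker : M *ᵥ 1 = 0 := by
    ext i
    simpa [Matrix.mulVec, dotProduct] using hM i
  exact Matrix.det_eq_zero_of_mulVec_eq_zero_of_mem_nonZeroDivisors hker
    (i := Classical.arbitrary n) (one_mem _)

lemma det_eq_of_row_eq_single {k : ℕ} {M : Matrix (Fin (k + 1)) (Fin (k + 1)) R}
    {i a : Fin (k + 1)} {c : R} (h : M i = Pi.single a c) :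
    M.det = (-1) ^ (i + a : ℕ) * c * (M.submatrix i.succAbove a.succAbove).det := by
  rw [Matrix.det_succ_row M i, Fintype.sum_eq_single a, h, Pi.single_eq_same]
  intro b hb
  simp [h, hb]

lemma det_mem_range_cast_of_row_eq_single {k : ℕ} {M : Matrix (Fin (k + 1)) (Fin (k + 1)) R}
    {i a : Fin (k + 1)} {ε : SignType} (h : M i = Pi.single a (ε : R))
    (hminor : (M.submatrix i.succAbove a.succAbove).det ∈ Set.range SignType.cast) :
    M.det ∈ Set.range SignType.cast := by
  obtain ⟨δ, hδ⟩ := hminor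
  exact ⟨(-1) ^ (i + a : ℕ) * ε * δ, by simp [det_eq_of_row_eq_single h, hδ]⟩

end Determinant

section OrientedIncidence

variable {E V : Type*} [DecidableEq V] (R : Type*) [CommRing R]

/-- The (arc-node) incidence matrix of the directed graph with arcs `E`, nodes `V`, and tail and
head maps `s` and `t`: the row of an arc `e` is the difference of the unit vectors at `s e`
and `t e`, so loops give zero rows. -/
def orientedIncidence (s t : E → V) : Matrix E V R :=
  Matrix.of fun e => Pi.single (s e) 1 - Pi.single (t e) 1

variable {R}

lemma orientedIncidence_apply (s t : E → V) (e : E) (v : V) :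
    orientedIncidence R s t e v = (if v = s e then 1 else 0) - if v = t e then 1 else 0 := by
  simp [orientedIncidence, Pi.single_apply]

lemma orientedIncidence_mulVec [Fintype V] (s t : E → V) (x : V → R) (e : E) :
    (orientedIncidence R s t *ᵥ x) e = x (s e) - x (t e) := by
  simp [Matrix.mulVec, dotProduct, orientedIncidence_apply, sub_mul]

lemma orientedIncidence_row_comp_sum_eq_zero_or_eq_single {ι : Type*} [Fintype ι] [DecidableEq ι]
    (s t : E → V) {g : ι → V} (hg : g.Injective) (e : E) :
    ∑ j, (orientedIncidence R s t e ∘ g) j = 0 ∨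
      ∃ (a : ι) (ε : SignType), orientedIncidence R s t e ∘ g = Pi.single a (ε : R) := by
  by_cases hs : ∃ a, g a = s e <;> by_cases ht : ∃ b, g b = t e
  · obtain ⟨a, ha⟩ := hs
    obtain ⟨b, hb⟩ := ht
    left
    simp [orientedIncidence_apply, ← ha, ← hb, hg.eq_iff]
  · obtain ⟨a, ha⟩ := hs
    push Not at ht
    refine .inr ⟨a, 1, funext fun j => ?_⟩
    simp [orientedIncidence_apply, ← ha, ht, hg.eq_iff, Pi.single_apply]
  · obtain ⟨b, hb⟩ := ht
    push Not at hs
    refine .inr ⟨b, -1, funext fun j => ?_⟩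
    simp [orientedIncidence_apply, ← hb, hs, hg.eq_iff, Pi.single_apply, neg_ite]
  · push Not at hs ht
    left
    simp [orientedIncidence_apply, hs, ht]

theorem isTotallyUnimodular_orientedIncidence (s t : E → V) :
    (orientedIncidence R s t).IsTotallyUnimodular := by
  intro k f g hf hg
  induction k with
  | zero => exact ⟨1, by simp⟩
  | succ k ih =>
    by_cases hsum : ∀ i, ∑ j, (orientedIncidence R s t).submatrix f g i j = 0
    · exact ⟨0, by rw [det_eq_zero_of_row_sums_eq_zero hsum, SignType.coe_zero]⟩
    · push Not at hsum
      obtain ⟨i, hi⟩ := hsum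
      obtain ⟨a, ε, hrow⟩ :=
        (orientedIncidence_row_comp_sum_eq_zero_or_eq_single s t hg (f i)).resolve_left hi
      exact det_mem_range_cast_of_row_eq_single hrow
        (ih (f ∘ i.succAbove) (g ∘ a.succAbove) (hf.comp Fin.succAbove_right_injective)
          (hg.comp Fin.succAbove_right_injective))

end OrientedIncidence

section DeltaModular

variable {m m' n R : Type*} [Fintype n] [DecidableEq n]
  [CommRing R] [LinearOrder R] {Δ : R} {A : Matrix m n R}

/-- `Δ` is the largest absolute value of the maximal minors of `A`. Row selections `f` need not be
injective, as a repeated row only contributes the determinant `0`. Full column rank is not part of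
the definition; it holds as soon as `Δ ≠ 0`. -/
structure IsDeltaModular (Δ : R) (A : Matrix m n R) : Prop where
  abs_det_le (f : n → m) : |(A.submatrix f id).det| ≤ Δ
  exists_abs_det_eq : ∃ f : n → m, |(A.submatrix f id).det| = Δ

namespace IsDeltaModular

lemma submatrix_of_surjective (hA : IsDeltaModular Δ A) {e : m' → m} (he : e.Surjective) :
    IsDeltaModular Δ (A.submatrix e id) := by
  refine ⟨fun f => hA.abs_det_le (e ∘ f), ?_⟩
  obtain ⟨f, hf⟩ := hA.exists_abs_det_eq
  obtain ⟨f', rfl⟩ := he.comp_left f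
  exact ⟨f', hf⟩

variable [IsStrictOrderedRing R]

theorem mul_right (hA : IsDeltaModular Δ A) (B : Matrix n n R) :
    IsDeltaModular (Δ * |B.det|) (A * B) := by
  have hdet (f : n → m) :
      |((A * B).submatrix f id).det| = |(A.submatrix f id).det| * |B.det| := by
    rw [← abs_mul, ← Matrix.det_mul]
    rfl
  refine ⟨fun f => ?_, hA.exists_abs_det_eq.imp fun f hf => by rw [hdet, hf]⟩
  rw [hdet]
  exact mul_le_mul_of_nonneg_right (hA.abs_det_le f) (abs_nonneg _)

lemma exists_injective_abs_det_eq (hA : IsDeltaModular Δ A) (hΔ : Δ ≠ 0) :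
    ∃ f : n → m, f.Injective ∧ |(A.submatrix f id).det| = Δ := by
  obtain ⟨f, hf⟩ := hA.exists_abs_det_eq
  refine ⟨f, fun i j hij => ?_, hf⟩
  by_contra hne
  have hdet : (A.submatrix f id).det = 0 :=
    Matrix.det_zero_of_row_eq hne (by ext; simp [hij])
  exact hΔ (by rw [← hf, hdet, abs_zero])

theorem rank_eq_card (hA : IsDeltaModular Δ A) (hΔ : Δ ≠ 0) : A.rank = Fintype.card n := by
  obtain ⟨f, hf⟩ := hA.exists_abs_det_eq
  have hdet : (A.submatrix f id).det ≠ 0 := abs_ne_zero.1 (hf ▸ hΔ)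
  refine le_antisymm A.rank_le_card_width ?_
  calc Fintype.card n = (A.submatrix f id).rank := (Matrix.rank_of_det_ne_zero hdet).symm
    _ ≤ A.rank := A.rank_submatrix_le f id

end IsDeltaModular

lemma isDeltaModular_one_of_isTotallyUnimodular [IsStrictOrderedRing R]
    (hA : A.IsTotallyUnimodular) (hdet : ∃ f : n → m, (A.submatrix f id).det ≠ 0) :
    IsDeltaModular 1 A := by
  have hcast (f : n → m) : (A.submatrix f id).det ∈ Set.range SignType.cast :=
    (Matrix.isTotallyUnimodular_iff_fintype A).1 hA n f id
  refine ⟨fun f => ?_, hdet.imp fun f hf => ?_⟩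
  · obtain ⟨ε, hε⟩ := hcast f
    rw [← hε]
    cases ε <;> simp
  · obtain ⟨ε, hε⟩ := hcast f
    rw [← hε] at hf ⊢
    cases ε <;> simp at hf ⊢

end DeltaModular

theorem eq_of_abs_sub_le_one_of_card_dvd_sum {ι : Type*} [Fintype ι] {x : ι → ℤ}
    (hx : ∀ i j, |x i - x j| ≤ 1) (hdvd : (Fintype.card ι : ℤ) ∣ ∑ i, x i) (i j : ι) :
    x i = x j := by
  have : Nonempty ι := ⟨i⟩
  obtain ⟨b, hb⟩ := Finite.exists_min x
  have hnonneg (k : ι) : 0 ≤ x k - x b := sub_nonneg.2 (hb k)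
  have hlt : ∑ k, (x k - x b) < Fintype.card ι :=
    calc ∑ k, (x k - x b) < ∑ _k : ι, 1 :=
          Finset.sum_lt_sum (fun k _ => (abs_le.1 (hx k b)).2) ⟨b, Finset.mem_univ b, by simp⟩
      _ = Fintype.card ι := by simp
  have hdvd' : (Fintype.card ι : ℤ) ∣ ∑ k, (x k - x b) := by
    rw [Finset.sum_sub_distrib, Finset.sum_const, Finset.card_univ, nsmul_eq_mul]
    exact hdvd.sub (dvd_mul_right _ _)
  have hsum : ∑ k, (x k - x b) = 0 :=
    Int.eq_zero_of_dvd_of_nonneg_of_lt (Finset.sum_nonneg fun k _ => hnonneg k) hlt hdvd'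
  have hmin (k : ι) : x k = x b :=
    sub_eq_zero.1 (congrFun ((Fintype.sum_eq_zero_iff_of_nonneg hnonneg).1 hsum) k)
  rw [hmin i, hmin j]

section Construction

variable (n : Type*) [DecidableEq n] (R : Type*) [CommRing R]

/-- The incidence matrix of the complete directed graph on `n` and an additional root `none`, with
the column of the root deleted. Its rows are `0`, `± eᵢ` and `eᵢ - eⱼ`. -/
def rootedCompleteIncidence : Matrix (Option n × Option n) n R :=
  (orientedIncidence R Prod.fst Prod.snd).submatrix id some

/-- The matrix `I + J`, where `J` is the all-ones matrix. Its image over `ℤ` is the lattice of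
vectors whose sum is divisible by `|n| + 1`. -/
def oneAddOnes : Matrix n n R :=
  1 + Matrix.of fun _ _ => 1

variable {n R} [Fintype n]

lemma rootedCompleteIncidence_mulVec (x : n → R) (p : Option n × Option n) :
    (rootedCompleteIncidence n R *ᵥ x) p = p.1.elim 0 x - p.2.elim 0 x := by
  rw [← orientedIncidence_mulVec Prod.fst Prod.snd (fun o : Option n => o.elim 0 x)]
  simp [rootedCompleteIncidence, Matrix.mulVec, dotProduct, Fintype.sum_option]

lemma oneAddOnes_mulVec (z : n → R) (i : n) : (oneAddOnes n R *ᵥ z) i = z i + ∑ k, z k := by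
  simp [oneAddOnes, Matrix.mulVec, dotProduct, Matrix.one_apply, add_mul, Finset.sum_add_distrib]

lemma sum_oneAddOnes_mulVec (z : n → R) :
    ∑ i, (oneAddOnes n R *ᵥ z) i = (Fintype.card n + 1) * ∑ k, z k := by
  simp only [oneAddOnes_mulVec, Finset.sum_add_distrib, Finset.sum_const, Finset.card_univ,
    nsmul_eq_mul]
  ring

lemma det_oneAddOnes : (oneAddOnes n R).det = Fintype.card n + 1 := by
  have hrankOne : oneAddOnes n R =
      1 + Matrix.replicateCol Unit (1 : n → R) * Matrix.replicateRow Unit (1 : n → R) := by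
    ext i j
    simp [oneAddOnes, Matrix.mul_apply]
  rw [hrankOne, Matrix.det_one_add_replicateCol_mul_replicateRow]
  simp [add_comm]

variable (n R) in
lemma isDeltaModular_one_rootedCompleteIncidence [LinearOrder R] [IsStrictOrderedRing R] :
    IsDeltaModular 1 (rootedCompleteIncidence n R) := by
  have hone : (rootedCompleteIncidence n R).submatrix (fun i => (some i, none)) id = 1 := by
    ext i j
    simp [rootedCompleteIncidence, orientedIncidence_apply, Matrix.one_apply, eq_comm]
  exact isDeltaModular_one_of_isTotallyUnimodular
    ((isTotallyUnimodular_orientedIncidence _ _).submatrix _ _) ⟨_, by rw [hone]; simp⟩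

variable (n R) in
theorem isDeltaModular_rootedCompleteIncidence_mul_oneAddOnes [LinearOrder R]
    [IsStrictOrderedRing R] :
    IsDeltaModular (Fintype.card n + 1 : R) (rootedCompleteIncidence n R * oneAddOnes n R) := by
  have h := (isDeltaModular_one_rootedCompleteIncidence n R).mul_right (oneAddOnes n R)
  rwa [det_oneAddOnes, one_mul, abs_of_nonneg (by positivity)] at h

theorem exists_two_le_abs_rootedCompleteIncidence_mul_oneAddOnes_mulVec {z : n → ℤ} (hz : z ≠ 0) :
    ∃ p, 2 ≤ |((rootedCompleteIncidence n ℤ * oneAddOnes n ℤ) *ᵥ z) p| := by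
  by_contra! hshort
  let y : Option n → ℤ := fun o => o.elim 0 (oneAddOnes n ℤ *ᵥ z)
  have hdiff (u v : Option n) : |y u - y v| ≤ 1 := by
    have h := hshort (u, v)
    rw [← Matrix.mulVec_mulVec, rootedCompleteIncidence_mulVec] at h
    exact Int.le_of_lt_add_one h
  have hdvd : (Fintype.card (Option n) : ℤ) ∣ ∑ o, y o :=
    ⟨∑ k, z k, by simp [y, Fintype.sum_option, sum_oneAddOnes_mulVec]⟩
  have hker : oneAddOnes n ℤ *ᵥ z = 0 :=
    funext fun i => eq_of_abs_sub_le_one_of_card_dvd_sum hdiff hdvd (some i) none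
  have hdet : (oneAddOnes n ℤ).det ≠ 0 := by
    rw [det_oneAddOnes]
    positivity
  exact hz (Matrix.eq_zero_of_mulVec_eq_zero hdet hker)

end Construction

/-- For every integer `Δ ≥ 2` there exist `m ∈ ℕ` and a `Δ`-modular
matrix `A ∈ ℤ^{m×(Δ−1)}` of full column rank such that `‖Az‖_∞ ≥ 2` for every
nonzero integer vector `z ∈ ℤ^{Δ−1}`. -/
theorem lower_bound_threshold (Δ : ℕ) (hΔ : 2 ≤ Δ) :
    ∃ (m : ℕ) (A : Matrix (Fin m) (Fin (Δ - 1)) ℤ),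
      A.rank = Δ - 1 ∧
      (∀ f : Fin (Δ - 1) → Fin m, Function.Injective f →
        |(A.submatrix f id).det| ≤ (Δ : ℤ)) ∧
      (∃ f : Fin (Δ - 1) → Fin m, Function.Injective f ∧
        |(A.submatrix f id).det| = (Δ : ℤ)) ∧
      (∀ z : Fin (Δ - 1) → ℤ, z ≠ 0 → ∃ i, 2 ≤ |A.mulVec z i|) := by
  let n := Fin (Δ - 1)
  let e := (Fintype.equivFin (Option n × Option n)).symm
  let A := (rootedCompleteIncidence n ℤ * oneAddOnes n ℤ).submatrix e id
  have hcard : (Fintype.card n + 1 : ℤ) = Δ := by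
    rw [Fintype.card_fin]
    omega
  have hA : IsDeltaModular (Δ : ℤ) A := hcard ▸
    (isDeltaModular_rootedCompleteIncidence_mul_oneAddOnes n ℤ).submatrix_of_surjective e.surjective
  have hΔ₀ : (Δ : ℤ) ≠ 0 := by omega
  refine ⟨_, A, (hA.rank_eq_card hΔ₀).trans (Fintype.card_fin _), fun f _ => hA.abs_det_le f,
    hA.exists_injective_abs_det_eq hΔ₀, fun z hz => ?_⟩
  obtain ⟨p, hp⟩ := exists_two_le_abs_rootedCompleteIncidence_mul_oneAddOnes_mulVec hz
  obtain ⟨i, rfl⟩ := e.surjective p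
  exact ⟨i, hp⟩
end

section
/- Let A ∈ ℤ^{m×n} have full column rank and let B be an invertible n×n submatrix of A, say B = A_R for a set R ⊆ [m] of row indices with |R| = n. Let I ⊆ [m] and J ⊆ [n] with |I| = |J|. Let a_{i_1}, …, a_{i_{|I|}} denote the rows of A indexed by I and let b_{j_1}, …, b_{j_{n−|J|}} denote the rows of B whose (row) index in B does not lie in J. Then |det (A·B^{−1})_{I,J}| = |det(a_{i_1}, …, a_{i_{|I|}}, b_{j_1}, …, b_{j_{n−|J|}})| / |det B|, where (A·B^{−1})_{I,J} denotes the submatrix of A·B^{−1} with rows indexed by I and columns indexed by J, and the matrix on the right-hand side is the n×n matrix whose rows are the listed vectors. -/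
/-!
Writing `A = M * B` with `M = A * B⁻¹`, the rows of `A` indexed by `I` stacked on the rows of `B`
not indexed by `J` are `N * B`, where `N` consists of the rows `M_I` stacked on the standard unit
rows not indexed by `J`. Listing the columns in `J` first makes `N` block upper triangular with
diagonal blocks `M_{I,J}` and `1`, so `det N = ± det M_{I,J}`.
-/

section

open Matrix

theorem det_fromRows_one_submatrix {S n p q : Type*} [CommRing S] [DecidableEq n]
    [Fintype p] [DecidableEq p] [Fintype q] [DecidableEq q] (M : Matrix p n S) (f : p ⊕ q ≃ n) :
    ((fromRows M ((1 : Matrix n n S).submatrix (f ∘ Sum.inr) id)).submatrix id f).det =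
      (M.submatrix id (f ∘ Sum.inl)).det := by
  have hblocks : (fromRows M ((1 : Matrix n n S).submatrix (f ∘ Sum.inr) id)).submatrix id f =
      fromBlocks (M.submatrix id (f ∘ Sum.inl)) (M.submatrix id (f ∘ Sum.inr)) 0 1 := by
    ext (i | i) (j | j) <;> simp [one_apply]
  rw [hblocks, det_fromBlocks_zero₂₁, det_one, mul_one]

theorem fromRows_mul_submatrix {S n o p q : Type*} [Semiring S] [Fintype n] [DecidableEq n]
    (M : Matrix p n S) (B : Matrix n o S) (g : q → n) :
    fromRows (M * B) (B.submatrix g id) =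
      fromRows M ((1 : Matrix n n S).submatrix g id) * B := by
  rw [fromRows_mul]
  exact congrArg _ (one_submatrix_mul g (Equiv.refl n) B).symm

theorem det_fromRows_mul_submatrix {S n p q : Type*} [CommRing S] [Fintype n] [DecidableEq n]
    [Fintype p] [DecidableEq p] [Fintype q] [DecidableEq q]
    (M : Matrix p n S) (B : Matrix n n S) (f : p ⊕ q ≃ n) :
    ((fromRows (M * B) (B.submatrix (f ∘ Sum.inr) id)).submatrix id f).det =
      (M.submatrix id (f ∘ Sum.inl)).det * B.det := by
  rw [fromRows_mul_submatrix, ← submatrix_mul_equiv _ _ id f f, det_mul,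
    det_fromRows_one_submatrix, det_submatrix_equiv_self]

theorem abs_det_dite_eq_abs_det_fromRows {S : Type*} [CommRing S] [LinearOrder S]
    [IsStrictOrderedRing S] {n k : ℕ} (U : Matrix (Fin k) (Fin n) S)
    (V : Matrix (Fin (n - k)) (Fin n) S) (f : Fin k ⊕ Fin (n - k) ≃ Fin n) :
    |(of fun i j : Fin n => if h : (i : ℕ) < k then U ⟨i, h⟩ j else V ⟨i - k, by omega⟩ j).det| =
      |((fromRows U V).submatrix id f).det| := by
  have hk : k ≤ n := by
    simpa using Fintype.card_le_of_injective _ (f.injective.comp Sum.inl_injective)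
  let g : Fin k ⊕ Fin (n - k) ≃ Fin n := finSumFinEquiv.trans (finCongr (Nat.add_sub_cancel' hk))
  rw [← abs_det_submatrix_equiv_equiv g f]
  congr 2
  ext (i | i) j <;> simp [g]

theorem bijective_sumElim_of_card_add_card_eq {n p q : Type*} [Fintype n] [Fintype p] [Fintype q]
    {κ : p → n} {e : q → n} (hκ : Function.Injective κ) (he : Function.Injective e)
    (hdisj : ∀ i j, κ i ≠ e j) (hcard : Fintype.card p + Fintype.card q = Fintype.card n) :
    Function.Bijective (Sum.elim κ e) :=
  (Fintype.bijective_iff_injective_and_card _).2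
    ⟨hκ.sumElim he hdisj, Fintype.card_sum.trans hcard⟩

theorem submatrix_determinants_general {K l : Type*} [Field K] [LinearOrder K]
    [IsStrictOrderedRing K] {n k : ℕ} (A : Matrix l (Fin n) K) (B : Matrix (Fin n) (Fin n) K)
    (hB : B.det ≠ 0) (ι : Fin k → l)
    (κ : Fin k → Fin n) (hκ : Function.Injective κ)
    (e : Fin (n - k) → Fin n) (he : Function.Injective e) (hdisj : ∀ i j, e i ≠ κ j) :
    |((A * B⁻¹).submatrix ι κ).det| =
      |(of fun i j : Fin n =>
          if h : (i : ℕ) < k then A (ι ⟨i, h⟩) j else B (e ⟨i - k, by omega⟩) j).det| /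
        |B.det| := by
  have hk : k ≤ n := by simpa using Fintype.card_le_of_injective κ hκ
  let f : Fin k ⊕ Fin (n - k) ≃ Fin n := Equiv.ofBijective (Sum.elim κ e)
    (bijective_sumElim_of_card_add_card_eq hκ he (fun i j => (hdisj j i).symm) (by simp [hk]))
  have hA : (A * B⁻¹).submatrix ι id * B = A.submatrix ι id :=
    congrArg (fun C => C.submatrix ι id) (nonsing_inv_mul_cancel_right B A hB.isUnit)
  rw [eq_div_iff (abs_ne_zero.2 hB), ← abs_mul]
  calc |((A * B⁻¹).submatrix ι κ).det * B.det|
      = |((fromRows ((A * B⁻¹).submatrix ι id * B) (B.submatrix e id)).submatrix id f).det| :=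
        congrArg abs (det_fromRows_mul_submatrix ((A * B⁻¹).submatrix ι id) B f).symm
    _ = |((fromRows (A.submatrix ι id) (B.submatrix e id)).submatrix id f).det| := by rw [hA]
    _ = _ := (abs_det_dite_eq_abs_det_fromRows (A.submatrix ι id) (B.submatrix e id) f).symm

end

/-- Let `A ∈ ℤ^{m×n}` have full column rank and let `B = A_R` be an
invertible `n×n` submatrix of `A` (rows selected by the injection `R`). Let `I ⊆ [m]`
and `J ⊆ [n]` with `|I| = |J| = k` (enumerated by injections `ι`, `κ`), and let
`e` enumerate the row indices of `B` not lying in `J`. Then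
`|det (A·B⁻¹)_{I,J}| = |det(a_{i_1},…,a_{i_k}, b_{j_1},…,b_{j_{n−k}})| / |det B|`,
where the matrix on the right has as rows the rows of `A` indexed by `I` followed by
the rows of `B` not indexed by `J`. -/
theorem submatrix_determinants (m n k : ℕ)
    (A : Matrix (Fin m) (Fin n) ℤ) (hrank : A.rank = n)
    (R : Fin n → Fin m) (hR : Function.Injective R)
    (hB : (A.submatrix R id).det ≠ 0)
    (ι : Fin k → Fin m) (hι : Function.Injective ι)
    (κ : Fin k → Fin n) (hκ : Function.Injective κ)
    (e : Fin (n - k) → Fin n) (he : Function.Injective e)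
    (hdisj : ∀ i j, e i ≠ κ j) :
    |(((A.map (Int.cast : ℤ → ℚ)) *
        ((A.submatrix R id).map (Int.cast : ℤ → ℚ))⁻¹).submatrix ι κ).det| =
      |(Matrix.of (fun i j : Fin n =>
          if h : (i : ℕ) < k then ((A (ι ⟨(i : ℕ), h⟩) j : ℤ) : ℚ)
          else (((A.submatrix R id) (e ⟨(i : ℕ) - k, by have := i.isLt; omega⟩) j : ℤ) : ℚ))).det| /
        |((A.submatrix R id).det : ℚ)| := by
  rw [Int.cast_det]
  exact submatrix_determinants_general _ _ (by rwa [← Int.cast_det, Int.cast_ne_zero]) ι κ hκ e he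
    hdisj
end

section
/- Let Δ ≥ 1, let A ∈ ℤ^{m×n} be Δ-modular of full column rank, let b ∈ ℤ^m, and let P = {x ∈ ℝ^n : Ax ≤ b}. Then every vertex of the convex hull of P ∩ ℤ^n lies on a face of P of dimension at most ⌈(Δ−1)/2⌉·(Δ−1). -/
/-!
Let `y` be a vertex, an integer point. Choose `n` linearly independent rows of `A`, as many as
possible of them tight at `y` and, subject to that, of maximal `|det|`. If `T` indexes the non-tight
rows chosen, the other `n - #T` rows cut out a face of dimension at most `#T` through `y`, so it
remains to bound `#T`.

If `V` is the chosen matrix, `ℤⁿ / Vℤⁿ` has order `|det V| ≤ Δ`. If `#T` exceeds the bound, the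
pigeonhole principle gives a nonempty `S ⊆ T` such that, after changing signs of rows, the classes
of the unit vectors `e i`, `i ∈ S`, all agree and sum to zero. Hence `V⁻¹ (e i - e j)` and
`V⁻¹ ∑ i ∈ S, e i` are integral. By maximality of `|det V|` every row of `A` has coordinates in
`[-1, 1]` with respect to the basis `V`, and its `2 × 2` minors in columns `T` are controlled as
well; this forces one of these integer vectors, `z`, to satisfy `|A z| ≤ 1`. As `A z` vanishes on
all tight rows, both `y + z` and `y - z` are feasible, contradicting extremality.
-/

open Matrix Finset
open scoped Pointwise

section MaxBasis

lemma updateRow_row_mem {ι κ α : Type*} [DecidableEq κ] {V : Matrix κ ι α} {s : Set (ι → α)}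
    {p : ι → α} {i j : κ} (hp : p ∈ s) (hV : j ≠ i → V j ∈ s) : V.updateRow i p j ∈ s := by
  obtain rfl | hji := eq_or_ne j i
  · rwa [show V.updateRow j p j = p from updateRow_self]
  · rw [show V.updateRow i p j = V j from updateRow_ne hji]
    exact hV hji

variable {ι K : Type*} [Fintype ι] [DecidableEq ι] [CommRing K]

lemma det_mul_dotProduct (V : Matrix ι ι K) (r z : ι → K) :
    V.det * (r ⬝ᵥ z) = Vᵀ.cramer r ⬝ᵥ V *ᵥ z := by
  rw [dotProduct_mulVec, ← mulVec_transpose, mulVec_cramer, det_transpose, smul_dotProduct,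
    smul_eq_mul]

lemma dotProduct_cramer_single (V : Matrix ι ι K) (r : ι → K) (i : ι) :
    r ⬝ᵥ V.cramer (Pi.single i 1) = Vᵀ.cramer r i := by
  rw [cramer_eq_adjugate_mulVec, cramer_eq_adjugate_mulVec, ← adjugate_transpose,
    mulVec_transpose, dotProduct_mulVec, dotProduct_single_one]

lemma mulVec_cramer_single (V : Matrix ι ι K) (i : ι) :
    V *ᵥ V.cramer (Pi.single i 1) = Pi.single i V.det := by
  rw [mulVec_cramer, ← Pi.single_smul, smul_eq_mul, mul_one]

variable [LinearOrder K]

/-- The rows of `V` are linearly independent, those indexed by `T` lie in `R`, and exchanging the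
latter for other elements of `R` cannot increase `|det V|`. The coordinates of `r` in this basis,
scaled by `det V` to avoid division, are the entries of `Vᵀ.cramer r`. -/
structure IsMaxBasis (R : Set (ι → K)) (T : Finset ι) (V : Matrix ι ι K) : Prop where
  det_ne_zero : V.det ≠ 0
  row_mem : ∀ i ∈ T, V i ∈ R
  abs_det_le : ∀ W : Matrix ι ι K, (∀ i ∈ T, W i ∈ R) → (∀ i ∉ T, W i = V i) → |W.det| ≤ |V.det|

namespace IsMaxBasis

variable {R : Set (ι → K)} {T : Finset ι} {V : Matrix ι ι K} {p q r t x y z : ι → K} {i j k : ι}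

lemma abs_cramer_le (h : IsMaxBasis R T V) (hr : r ∈ R) (hi : i ∈ T) :
    |Vᵀ.cramer r i| ≤ |V.det| := by
  rw [cramer_transpose_apply]
  exact h.abs_det_le _ (fun j hj => updateRow_row_mem hr fun _ => h.row_mem j hj) fun _ hj =>
    updateRow_ne (ne_of_mem_of_not_mem hi hj).symm

variable [IsStrictOrderedRing K]

lemma abs_dotProduct_le (h : IsMaxBasis R T V) (hr : r ∈ R) (hi : i ∈ T) {c : K}
    (hy : V *ᵥ y = Pi.single i c) : |r ⬝ᵥ y| ≤ |c| := by
  refine le_of_mul_le_mul_left ?_ (abs_pos.mpr h.det_ne_zero)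
  calc |V.det| * |r ⬝ᵥ y| = |Vᵀ.cramer r i| * |c| := by
        rw [← abs_mul, det_mul_dotProduct, hy, dotProduct_single, abs_mul]
    _ ≤ |V.det| * |c| := mul_le_mul_of_nonneg_right (h.abs_cramer_le hr hi) (abs_nonneg c)

lemma dotProduct_eq_zero (h : IsMaxBasis R T V) (hr : ∀ i ∈ T, Vᵀ.cramer r i = 0)
    (hz : ∀ i ∉ T, (V *ᵥ z) i = 0) : r ⬝ᵥ z = 0 := by
  refine (mul_eq_zero.mp ?_).resolve_left h.det_ne_zero
  rw [det_mul_dotProduct]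
  refine sum_eq_zero fun i _ => ?_
  by_cases hi : i ∈ T
  · rw [hr i hi, zero_mul]
  · rw [hz i hi, mul_zero]

lemma updateRow (h : IsMaxBasis R T V) (hp : p ∈ R) (hi : i ∈ T) {c : K} (hc : c ≠ 0)
    (hy : V *ᵥ y = Pi.single i c) (hpy : p ⬝ᵥ y = c) : IsMaxBasis R T (V.updateRow i p) := by
  have hdet : (V.updateRow i p).det = V.det := by
    refine mul_right_cancel₀ hc ?_
    rw [← cramer_transpose_apply, ← dotProduct_single, ← hy, ← det_mul_dotProduct, hpy]
  refine ⟨hdet ▸ h.det_ne_zero, fun j hj => updateRow_row_mem hp fun _ => h.row_mem j hj,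
    fun W hW hWV => hdet ▸ ?_⟩
  exact h.abs_det_le W hW fun j hj =>
    (hWV j hj).trans (updateRow_ne (ne_of_mem_of_not_mem hi hj).symm)

lemma replaceRows (h : IsMaxBasis R T V) {p : ι → ι → K} {S : Finset ι} (hST : S ⊆ T)
    (hpR : ∀ i ∈ S, p i ∈ R)
    (hp : ∀ i ∈ S, ∀ j ∈ S, Vᵀ.cramer (p i) j = if i = j then V.det else 0) :
    IsMaxBasis R T (of fun i => if i ∈ S then p i else V i) := by
  induction S using Finset.induction_on with
  | empty => simpa using! h
  | insert a S ha ih =>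
    have haS := mem_insert_self a S
    have hSsub := subset_insert a S
    let W : Matrix ι ι K := of fun i => if i ∈ S then p i else V i
    have hW : IsMaxBasis R T W := ih (hSsub.trans hST) (fun i hi => hpR i (hSsub hi))
      fun i hi j hj => hp i (hSsub hi) j (hSsub hj)
    have hWy : W *ᵥ V.cramer (Pi.single a 1) = Pi.single a V.det := by
      ext i
      rw [show (W *ᵥ _) i = (if i ∈ S then p i else V i) ⬝ᵥ _ from rfl]
      split_ifs with hi
      · have hia : i ≠ a := ne_of_mem_of_not_mem hi ha
        rw [dotProduct_cramer_single, hp i (hSsub hi) a haS, if_neg hia, Pi.single_eq_of_ne hia]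
      · exact congrFun (mulVec_cramer_single V a) i
    convert hW.updateRow (hpR a haS) (hST haS) h.det_ne_zero hWy
      (by rw [dotProduct_cramer_single, hp a haS a haS, if_pos rfl]) using 1
    ext i j
    obtain rfl | hia := eq_or_ne i a <;> simp [W, *]

lemma abs_det_mul_cramer_sub_le (h : IsMaxBasis R T V) (hp : p ∈ R) (hr : r ∈ R) (hi : i ∈ T)
    (hj : j ∈ T) (hij : i ≠ j) (hpi : Vᵀ.cramer p i = V.det) :
    |V.det * Vᵀ.cramer r j - Vᵀ.cramer p j * Vᵀ.cramer r i| ≤ |V.det * V.det| := by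
  let y := V.det • V.cramer (Pi.single j 1) - Vᵀ.cramer p j • V.cramer (Pi.single i 1)
  have dotProduct_y (s : ι → K) :
      s ⬝ᵥ y = V.det * Vᵀ.cramer s j - Vᵀ.cramer p j * Vᵀ.cramer s i := by
    simp only [y, dotProduct_sub, dotProduct_smul, dotProduct_cramer_single, smul_eq_mul]
  have hy : V.updateRow i p *ᵥ y = Pi.single j (V.det * V.det) := by
    rw [updateRow_mulVec, dotProduct_y, hpi, mul_comm, sub_self]
    simp only [y, mulVec_sub, mulVec_smul, mulVec_cramer_single]
    ext k
    obtain rfl | hki := eq_or_ne k i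
    · simp [hij]
    · simp [hki, Pi.single_apply]
  rw [← dotProduct_y]
  exact (h.updateRow hp hi h.det_ne_zero (mulVec_cramer_single V i)
    (by rw [dotProduct_cramer_single, hpi])).abs_dotProduct_le hr hj hy

lemma cramer_eq_of_two_le_dotProduct (h : IsMaxBasis R T V) (hp : p ∈ R) (hi : i ∈ T) (hj : j ∈ T)
    (hz : V *ᵥ z = Pi.single i 1 - Pi.single j 1) (hpz : 2 ≤ p ⬝ᵥ z) :
    Vᵀ.cramer p i = V.det ∧ Vᵀ.cramer p j = -V.det := by
  have hval : V.det * (p ⬝ᵥ z) = Vᵀ.cramer p i - Vᵀ.cramer p j := by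
    rw [det_mul_dotProduct, hz, dotProduct_sub, dotProduct_single_one, dotProduct_single_one]
  have hpi := abs_le.mp (h.abs_cramer_le hp hi)
  have hpj := abs_le.mp (h.abs_cramer_le hp hj)
  rcases lt_or_gt_of_ne h.det_ne_zero with hneg | hpos
  · rw [abs_of_neg hneg] at hpi hpj
    have := mul_le_mul_of_nonpos_left hpz hneg.le
    constructor <;> linarith
  · rw [abs_of_pos hpos] at hpi hpj
    have := mul_le_mul_of_nonneg_left hpz hpos.le
    constructor <;> linarith

lemma cramer_eq_zero (h : IsMaxBasis R T V) (hp : p ∈ R) (hq : q ∈ R) (ht : t ∈ R)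
    (hi : i ∈ T) (hj : j ∈ T) (hk : k ∈ T) (hik : i ≠ k) (hjk : j ≠ k)
    (hpi : Vᵀ.cramer p i = V.det) (hpj : Vᵀ.cramer p j = -V.det)
    (hqi : Vᵀ.cramer q i = V.det) (hqk : Vᵀ.cramer q k = -V.det)
    (htj : Vᵀ.cramer t j = V.det) (htk : Vᵀ.cramer t k = -V.det) : Vᵀ.cramer p k = 0 := by
  -- The minors of `p, q` in columns `i, k` and of `t, p` in columns `j, k` bound
  -- `V.det * Vᵀ.cramer p k` from below and above by zero.
  have hpq := h.abs_det_mul_cramer_sub_le hp hq hi hk hik hpi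
  have htp := h.abs_det_mul_cramer_sub_le ht hp hj hk hjk htj
  rw [hqi, hqk, abs_of_nonneg (mul_self_nonneg V.det)] at hpq
  rw [hpj, htk, abs_of_nonneg (mul_self_nonneg V.det)] at htp
  have hprod : V.det * Vᵀ.cramer p k = 0 := by
    linarith [(abs_le.mp hpq).1, (abs_le.mp htp).1]
  exact (mul_eq_zero.mp hprod).resolve_left h.det_ne_zero

lemma exists_cramer_eq_ite (h : IsMaxBasis R T V) {S : Finset ι} (hST : S ⊆ T) {s : ι} (hs : s ∈ S)
    (hsep : ∀ i ∈ S, ∀ j ∈ S, i ≠ j →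
      ∃ p ∈ R, Vᵀ.cramer p i = V.det ∧ Vᵀ.cramer p j = -V.det) :
    ∃ p : ι → ι → K, ∀ i ∈ S.erase s, p i ∈ R ∧ Vᵀ.cramer (p i) s = -V.det ∧
      ∀ j ∈ S.erase s, Vᵀ.cramer (p i) j = if i = j then V.det else 0 := by
  choose! p hpR hpi hps using fun i hi => hsep i hi s hs
  refine ⟨p, fun i hi => ?_⟩
  obtain ⟨his, hiS⟩ := mem_erase.mp hi
  refine ⟨hpR i hiS his, hps i hiS his, fun j hj => ?_⟩
  obtain ⟨hjs, hjS⟩ := mem_erase.mp hj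
  obtain rfl | hij := eq_or_ne i j
  · rw [hpi i hiS his, if_pos rfl]
  obtain ⟨q, hq, hqi, hqj⟩ := hsep i hiS j hjS hij
  obtain ⟨t, ht, hts, htj⟩ := hsep s hs j hjS hjs.symm
  rw [if_neg hij]
  exact h.cramer_eq_zero (hpR i hiS his) hq ht (hST hiS) (hST hs) (hST hjS) hij hjs.symm
    (hpi i hiS his) (hps i hiS his) hqi hqj hts htj

-- Each `i ∈ S` other than a fixed `s` gets a row `p i` orthogonal to `x`; pivoting to these rows
-- turns `x` into a vector of the dual basis.
lemma abs_dotProduct_le_one (h : IsMaxBasis R T V) {S : Finset ι} (hST : S ⊆ T) (hS : S.Nonempty)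
    (hsep : ∀ i ∈ S, ∀ j ∈ S, i ≠ j →
      ∃ p ∈ R, Vᵀ.cramer p i = V.det ∧ Vᵀ.cramer p j = -V.det)
    (hx : V *ᵥ x = ∑ i ∈ S, Pi.single i 1) (hr : r ∈ R) : |r ⬝ᵥ x| ≤ 1 := by
  obtain ⟨s, hs⟩ := hS
  obtain ⟨p, hp⟩ := h.exists_cramer_eq_ite hST hs hsep
  have hpx : ∀ i ∈ S.erase s, p i ⬝ᵥ x = 0 := by
    intro i hi
    obtain ⟨-, hps, hpj⟩ := hp i hi
    refine (mul_eq_zero.mp ?_).resolve_left h.det_ne_zero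
    rw [det_mul_dotProduct, hx, dotProduct_sum]
    simp only [dotProduct_single_one]
    rw [← add_sum_erase _ _ hs, hps, sum_congr rfl hpj, sum_ite_eq, if_pos hi, neg_add_cancel]
  have hW := h.replaceRows ((erase_subset s S).trans hST) (fun i hi => (hp i hi).1)
    fun i hi => (hp i hi).2.2
  have hWx : (of fun i => if i ∈ S.erase s then p i else V i) *ᵥ x = Pi.single s 1 := by
    ext i
    rw [show (of _ *ᵥ x) i = (if i ∈ S.erase s then p i else V i) ⬝ᵥ x from rfl]
    split_ifs with hi
    · rw [hpx i hi, Pi.single_eq_of_ne (ne_of_mem_erase hi)]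
    · rw [show V i ⬝ᵥ x = (V *ᵥ x) i from rfl, hx, Finset.sum_apply]
      obtain rfl | his := eq_or_ne i s
      · simp [hs]
      · have hiS : i ∉ S := fun hiS => hi (mem_erase.mpr ⟨his, hiS⟩)
        simp [hiS, his]
  simpa using hW.abs_dotProduct_le hr (hST hs) hWx

lemma diagonal_mul (h : IsMaxBasis R T V) {σ : ι → K} (hσ : ∀ i, |σ i| = 1)
    (hσT : ∀ i ∉ T, σ i = 1) : IsMaxBasis (R ∪ -R) T (diagonal σ * V) := by
  have abs_det (τ : ι → K) (hτ : ∀ i, |τ i| = 1) (W : Matrix ι ι K) :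
      |(diagonal τ * W).det| = |W.det| := by
    simp [abs_mul, abs_prod, hτ]
  have row (τ : ι → K) (W : Matrix ι ι K) (i : ι) : (diagonal τ * W) i = τ i • W i := by
    ext j
    simp
  refine ⟨?_, fun i hi => ?_, fun W hW hWV => ?_⟩
  · rw [← abs_ne_zero, abs_det σ hσ]
    exact abs_ne_zero.mpr h.det_ne_zero
  · rw [row]
    obtain hi1 | hi1 := eq_or_eq_neg_of_abs_eq (hσ i)
    · simpa [hi1] using Or.inl (h.row_mem i hi)
    · simpa [hi1] using Or.inr (h.row_mem i hi)
  · have hτ : ∀ i, ∃ τ : K, |τ| = 1 ∧ (i ∈ T → τ • W i ∈ R) ∧ (i ∉ T → τ = 1) := by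
      intro i
      by_cases hi : i ∈ T
      · obtain hWi | hWi := hW i hi
        · exact ⟨1, by simp, by simp [hWi], by simp⟩
        · exact ⟨-1, by simp, fun _ => by simpa using hWi, fun h => absurd hi h⟩
      · exact ⟨1, by simp, by simp [hi], by simp⟩
    choose τ hτ hτR hτT using hτ
    rw [abs_det σ hσ, ← abs_det τ hτ]
    refine h.abs_det_le _ (fun i hi => row τ W i ▸ hτR i hi) fun i hi => ?_
    rw [row, hτT i hi, hWV i hi, row, hσT i hi, one_smul, one_smul]

end IsMaxBasis

end MaxBasis

section SignClasses

variable {ι G : Type*} [AddCommGroup G] (e : ι → G) (T : Finset ι)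

/-- The indices in `T` whose value under `e` is `g` up to sign: the pigeonholes for finding a
vanishing signed sum of equal terms. -/
def signClass [DecidableEq G] (g : G) : Finset ι := {i ∈ T | e i = g ∨ e i = -g}

variable {e T}

lemma exists_signed_sum_eq_zero_of_addOrderOf_le [DecidableEq G] {g : G} (hg : 0 < addOrderOf g)
    (hle : addOrderOf g ≤ #(signClass e T g)) :
    ∃ S ⊆ T, S.Nonempty ∧ ∃ σ : ι → ℤ, (∀ i, |σ i| = 1) ∧ (∀ i ∉ T, σ i = 1) ∧
      (∀ i ∈ S, ∀ j ∈ S, σ i • e i = σ j • e j) ∧ ∑ i ∈ S, σ i • e i = 0 := by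
  classical
  obtain ⟨S, hS, hcard⟩ := exists_subset_card_eq hle
  have hST : S ⊆ T := hS.trans (filter_subset _ _)
  let σ : ι → ℤ := fun i => if i ∈ S ∧ e i ≠ g then -1 else 1
  have hσg : ∀ i ∈ S, σ i • e i = g := by
    intro i hi
    by_cases hig : e i = g
    · simp [σ, hig]
    · have hneg : e i = -g := (mem_filter.mp (hS hi)).2.resolve_left hig
      rw [show σ i = -1 from if_pos ⟨hi, hig⟩, hneg, neg_one_zsmul, neg_neg]
  refine ⟨S, hST, card_pos.mp (hcard ▸ hg), σ, fun i => ?_, fun i hi => ?_, fun i hi j hj => ?_, ?_⟩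
  · simp only [σ]
    split_ifs <;> simp
  · exact if_neg fun h => hi (hST h.1)
  · rw [hσg i hi, hσg j hj]
  · rw [sum_congr rfl hσg, sum_const, hcard, addOrderOf_nsmul_eq_zero]

lemma card_filter_add_card_filter_neg_le [Finite G] [DecidableEq G] {g : G}
    (hlt : #(signClass e T g) < addOrderOf g) :
    #{i ∈ T | e i = g} + #{i ∈ T | e i = -g} ≤ max 2 (Nat.card G - 1) := by
  classical
  by_cases hg : -g = g
  · have horder : addOrderOf g ≤ 2 :=
      addOrderOf_le_of_nsmul_eq_zero two_pos (by rw [two_nsmul]; nth_rw 1 [← hg]; simp)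
    simp only [signClass, hg, or_self] at hlt ⊢
    lia
  · have hdisj : Disjoint {i ∈ T | e i = g} {i ∈ T | e i = -g} :=
      disjoint_filter.mpr fun i _ hi hi' => hg (hi'.symm.trans hi)
    have horder : addOrderOf g ≤ Nat.card G := addOrderOf_le_card
    rw [← card_union_of_disjoint hdisj, ← filter_or]
    simp only [signClass] at hlt
    lia

lemma sum_card_filter_add_card_filter_neg [Fintype G] [DecidableEq G] :
    ∑ g : G, (#{i ∈ T | e i = g} + #{i ∈ T | e i = -g}) = 2 * #T := by
  have hpos : ∑ g : G, #{i ∈ T | e i = g} = #T :=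
    (card_eq_sum_card_fiberwise fun _ _ => mem_univ _).symm
  have hneg : ∑ g : G, #{i ∈ T | e i = -g} = #T :=
    (Equiv.sum_comp (Equiv.neg G) fun g => #{i ∈ T | e i = g}).trans hpos
  rw [sum_add_distrib, hpos, hneg, two_mul]

lemma two_mul_card_le [Finite G] [DecidableEq G] (hlt : ∀ g, #(signClass e T g) < addOrderOf g) :
    2 * #T ≤ (Nat.card G - 1) * max 2 (Nat.card G - 1) := by
  have := Fintype.ofFinite G
  have hzero : #{i ∈ T | e i = 0} = 0 := by
    have hlt0 := hlt 0
    rwa [signClass, neg_zero, addOrderOf_zero, Nat.lt_one_iff, filter_congr fun _ _ => or_self_iff]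
      at hlt0
  have hsum := sum_card_filter_add_card_filter_neg (e := e) (T := T)
  calc 2 * #T = ∑ g ∈ univ.erase (0 : G), (#{i ∈ T | e i = g} + #{i ∈ T | e i = -g}) := by
        rw [← hsum, ← add_sum_erase _ _ (mem_univ (0 : G)), neg_zero, hzero, zero_add, zero_add]
    _ ≤ #(univ.erase (0 : G)) • max 2 (Nat.card G - 1) :=
        sum_le_card_nsmul _ _ _ fun g _ => card_filter_add_card_filter_neg_le (hlt g)
    _ = (Nat.card G - 1) * max 2 (Nat.card G - 1) := by
        rw [card_erase_of_mem (mem_univ _), card_univ, Nat.card_eq_fintype_card, smul_eq_mul]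

lemma le_div_two_mul_of_two_mul_le {N Δ t : ℕ} (hN : 1 ≤ N) (hNΔ : N ≤ Δ)
    (ht : 2 * t ≤ (N - 1) * max 2 (N - 1)) : t ≤ Δ / 2 * (Δ - 1) := by
  refine le_trans ?_ (Nat.mul_le_mul (Nat.div_le_div_right hNΔ) (Nat.sub_le_sub_right hNΔ 1))
  obtain rfl | rfl | hN3 : N = 1 ∨ N = 2 ∨ 3 ≤ N := by lia
  · lia
  · lia
  · rw [max_eq_right (by lia)] at ht
    have : (N - 1) * (N - 1) ≤ 2 * (N / 2) * (N - 1) := Nat.mul_le_mul_right _ (by lia)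
    rw [mul_assoc] at this
    lia

lemma exists_signed_sum_eq_zero [Finite G] {Δ : ℕ} (hG : Nat.card G ≤ Δ)
    (hT : Δ / 2 * (Δ - 1) < #T) :
    ∃ S ⊆ T, S.Nonempty ∧ ∃ σ : ι → ℤ, (∀ i, |σ i| = 1) ∧ (∀ i ∉ T, σ i = 1) ∧
      (∀ i ∈ S, ∀ j ∈ S, σ i • e i = σ j • e j) ∧ ∑ i ∈ S, σ i • e i = 0 := by
  classical
  obtain ⟨g, hg⟩ : ∃ g, addOrderOf g ≤ #(signClass e T g) := by
    by_contra! hlt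
    exact hT.not_ge (le_div_two_mul_of_two_mul_le Nat.card_pos hG (two_mul_card_le hlt))
  exact exists_signed_sum_eq_zero_of_addOrderOf_le (addOrderOf_pos g) hg

end SignClasses

section Lattice

lemma mulVec_add_le {ι κ : Type*} [Fintype ι] {A : Matrix κ ι ℤ} {b : κ → ℤ} {u z : ι → ℤ}
    (hu : A *ᵥ u ≤ b)
    (htight : ∀ q, (A *ᵥ u) q = b q → (A *ᵥ z) q = 0) (hz : ∀ q, |(A *ᵥ z) q| ≤ 1) :
    A *ᵥ (u + z) ≤ b := by
  intro q
  have hzq := (abs_le.mp (hz q)).2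
  rw [mulVec_add, Pi.add_apply]
  obtain heq | hlt := (hu q).eq_or_lt
  · rw [htight q heq, heq, add_zero]
  · lia

variable {ι : Type*} [Fintype ι] [DecidableEq ι] {R : Set (ι → ℤ)} {T : Finset ι}
  {V : Matrix ι ι ℤ}

lemma natCard_quotient_range_toLin' (hV : V.det ≠ 0) :
    Nat.card ((ι → ℤ) ⧸ LinearMap.range V.toLin') = V.det.natAbs := by
  have hinj : Function.Injective V.toLin' := mulVec_injective_of_det_ne_zero hV
  rw [← Submodule.natAbs_det_equiv _ (LinearEquiv.ofInjective V.toLin' hinj),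
    ← LinearMap.det_toLin']
  rfl

namespace IsMaxBasis

lemma exists_ne_zero_abs_dotProduct_le_one (h : IsMaxBasis R T V) (hneg : ∀ r ∈ R, -r ∈ R)
    {S : Finset ι} (hST : S ⊆ T) (hS : S.Nonempty)
    (hdiff : ∀ i ∈ S, ∀ j ∈ S, ∃ z, V *ᵥ z = Pi.single i 1 - Pi.single j 1)
    (hsum : ∃ x, V *ᵥ x = ∑ i ∈ S, Pi.single i 1) :
    ∃ z ≠ 0, (∀ i ∉ T, (V *ᵥ z) i = 0) ∧ ∀ r ∈ R, |r ⬝ᵥ z| ≤ 1 := by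
  by_contra! hlong
  have hsep : ∀ i ∈ S, ∀ j ∈ S, i ≠ j →
      ∃ p ∈ R, Vᵀ.cramer p i = V.det ∧ Vᵀ.cramer p j = -V.det := by
    intro i hi j hj hij
    obtain ⟨z, hz⟩ := hdiff i hi j hj
    have hz0 : z ≠ 0 := by
      rintro rfl
      simpa [hij] using congrFun hz i
    have hzT : ∀ k ∉ T, (V *ᵥ z) k = 0 := fun k hk => by
      simp [hz, (ne_of_mem_of_not_mem (hST hi) hk).symm, (ne_of_mem_of_not_mem (hST hj) hk).symm]
    obtain ⟨r, hr, hrz⟩ := hlong z hz0 hzT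
    obtain ⟨p, hp, hpz⟩ : ∃ p ∈ R, 2 ≤ p ⬝ᵥ z := by
      obtain hpos | hneg' := lt_abs.mp hrz
      · exact ⟨r, hr, hpos⟩
      · exact ⟨-r, hneg r hr, by rwa [neg_dotProduct]⟩
    exact ⟨p, hp, h.cramer_eq_of_two_le_dotProduct hp (hST hi) (hST hj) hz hpz⟩
  obtain ⟨x, hx⟩ := hsum
  have hx_apply (k : ι) : (V *ᵥ x) k = if k ∈ S then 1 else 0 := by
    rw [hx, Finset.sum_apply, sum_pi_single]
  have hx0 : x ≠ 0 := by
    rintro rfl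
    obtain ⟨s, hs⟩ := hS
    simpa [hs] using hx_apply s
  have hxT : ∀ k ∉ T, (V *ᵥ x) k = 0 := fun k hk => by
    rw [hx_apply, if_neg fun hkS => hk (hST hkS)]
  obtain ⟨r, hr, hrx⟩ := hlong x hx0 hxT
  exact hrx.not_ge (h.abs_dotProduct_le_one hST hS hsep hx hr)

lemma exists_ne_zero_abs_dotProduct_le_one_of_lt_card {Δ : ℕ} (h : IsMaxBasis R T V)
    (hV : |V.det| ≤ Δ) (hT : Δ / 2 * (Δ - 1) < #T) :
    ∃ z ≠ 0, (∀ i ∉ T, (V *ᵥ z) i = 0) ∧ ∀ r ∈ R, |r ⬝ᵥ z| ≤ 1 := by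
  let L : Submodule ℤ (ι → ℤ) := LinearMap.range V.toLin'
  have hcard : Nat.card ((ι → ℤ) ⧸ L) = V.det.natAbs :=
    natCard_quotient_range_toLin' h.det_ne_zero
  have : Finite ((ι → ℤ) ⧸ L) :=
    Nat.finite_of_card_ne_zero (hcard ▸ Int.natAbs_ne_zero.mpr h.det_ne_zero)
  obtain ⟨S, hST, hS, σ, hσ, hσT, heq, hsum⟩ := exists_signed_sum_eq_zero
    (e := fun i => L.mkQ (Pi.single i 1)) (T := T) (Δ := Δ)
    (hcard.trans_le (by rwa [Int.abs_eq_natAbs, Nat.cast_le] at hV)) hT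
  have mulVec_apply (z : ι → ℤ) (i : ι) : ((diagonal σ * V) *ᵥ z) i = σ i * (V *ᵥ z) i := by
    rw [← mulVec_mulVec, mulVec_diagonal]
  have exists_mulVec_eq (w : ι → ℤ) (hw : L.mkQ (diagonal σ *ᵥ w) = 0) :
      ∃ z, (diagonal σ * V) *ᵥ z = w := by
    obtain ⟨z, hz⟩ := (Submodule.Quotient.mk_eq_zero L).mp hw
    refine ⟨z, funext fun i => ?_⟩
    rw [mulVec_apply, show (V *ᵥ z) i = _ from congrFun hz i, mulVec_diagonal, ← mul_assoc,
      ← abs_mul_abs_self, hσ, one_mul, one_mul]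
  have diagonal_single (i : ι) : diagonal σ *ᵥ Pi.single i 1 = σ i • Pi.single i 1 := by
    rw [diagonal_mulVec_single, ← Pi.single_smul, smul_eq_mul]
  obtain ⟨z, hz, hzT, hzR⟩ := (h.diagonal_mul hσ hσT).exists_ne_zero_abs_dotProduct_le_one
    (fun r hr => by simpa [or_comm] using hr) hST hS
    (fun i hi j hj => exists_mulVec_eq _ (by
      rw [mulVec_sub, diagonal_single, diagonal_single, map_sub, map_zsmul, map_zsmul,
        heq i hi j hj, sub_self]))
    (exists_mulVec_eq _ (by
      simpa only [mulVec_sum, diagonal_single, map_sum, map_zsmul] using hsum))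
  refine ⟨z, hz, fun i hi => ?_, fun r hr => hzR r (Or.inl hr)⟩
  rw [← hzT i hi, mulVec_apply, hσT i hi, one_mul]

end IsMaxBasis

-- The extra row conditions are met by minimizing first the number of rows outside `R₀`, then
-- `Δ - |det V|`.
lemma exists_isMaxBasis {R₀ : Set (ι → ℤ)} (hR₀ : R₀ ⊆ R) {Δ : ℕ}
    (hΔ : ∀ W : Matrix ι ι ℤ, (∀ i, W i ∈ R) → |W.det| ≤ Δ)
    (hR : ∃ W : Matrix ι ι ℤ, (∀ i, W i ∈ R) ∧ W.det ≠ 0) :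
    ∃ (V : Matrix ι ι ℤ) (T : Finset ι), IsMaxBasis R T V ∧ (∀ i, V i ∈ R) ∧
      (∀ i ∉ T, V i ∈ R₀) ∧ ∀ r ∈ R₀, ∀ i ∈ T, Vᵀ.cramer r i = 0 := by
  classical
  let T : Matrix ι ι ℤ → Finset ι := fun W => {i | W i ∉ R₀}
  have notMem_T {W : Matrix ι ι ℤ} {i : ι} : i ∉ T W ↔ W i ∈ R₀ := by simp [T]
  obtain ⟨V, ⟨hVR, hV⟩, hmin⟩ := exists_minimalFor_of_wellFoundedLT
    (fun W : Matrix ι ι ℤ => (∀ i, W i ∈ R) ∧ W.det ≠ 0)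
    (fun W => toLex (#(T W), Δ - W.det.natAbs)) hR
  refine ⟨V, T V, ⟨hV, fun i _ => hVR i, fun W hW hWV => ?_⟩, hVR, fun i => notMem_T.mp,
    fun r hr i hi => ?_⟩
  · by_contra! hlt
    have hWR : ∀ i, W i ∈ R := fun i =>
      if hi : i ∈ T V then hW i hi else hWV i hi ▸ hVR i
    have hTW : T W ⊆ T V := fun i => not_imp_not.mp fun hi =>
      notMem_T.mpr (hWV i hi ▸ notMem_T.mp hi)
    have hWΔ := hΔ W hWR
    rw [Int.abs_eq_natAbs, Nat.cast_le] at hWΔ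
    rw [Int.abs_eq_natAbs, Int.abs_eq_natAbs, Nat.cast_lt] at hlt
    have hlex : toLex (#(T W), Δ - W.det.natAbs) < toLex (#(T V), Δ - V.det.natAbs) :=
      Prod.Lex.toLex_lt_toLex'.mpr
        ⟨card_le_card hTW, fun _ => Nat.sub_lt_sub_left (hlt.trans_le hWΔ) hlt⟩
    exact (hmin ⟨hWR, Int.natAbs_pos.mp hlt.pos⟩ hlex.le).not_gt hlex
  · by_contra hne
    rw [cramer_transpose_apply] at hne
    have hTW : T (V.updateRow i r) ⊂ T V := by
      refine (ssubset_iff_of_subset fun j => not_imp_not.mp fun hj => ?_).mpr ⟨i, hi, ?_⟩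
      · exact notMem_T.mpr (updateRow_row_mem hr fun _ => notMem_T.mp hj)
      · exact notMem_T.mpr (updateRow_row_mem hr fun hii => absurd rfl hii)
    have hlex : toLex (#(T (V.updateRow i r)), Δ - (V.updateRow i r).det.natAbs) <
        toLex (#(T V), Δ - V.det.natAbs) :=
      Prod.Lex.toLex_lt_toLex.mpr (Or.inl (card_lt_card hTW))
    exact (hmin ⟨fun j => updateRow_row_mem (hR₀ hr) fun _ => hVR j, hne⟩ hlex.le).not_gt hlex

lemma abs_det_le_of_forall_mem_range_row {κ K : Type*} [CommRing K] [LinearOrder K]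
    [IsOrderedAddMonoid K] {A : Matrix κ ι K} {Δ : K} (hΔ : 0 ≤ Δ)
    (hA : ∀ f : ι → κ, Function.Injective f → |(A.submatrix f id).det| ≤ Δ) {W : Matrix ι ι K}
    (hW : ∀ i, W i ∈ Set.range A.row) : |W.det| ≤ Δ := by
  choose f hf using hW
  obtain rfl : A.submatrix f id = W := funext hf
  by_cases hinj : Function.Injective f
  · exact hA f hinj
  · obtain ⟨i, j, hij, hne⟩ := Function.not_injective_iff.mp hinj
    rw [det_zero_of_row_eq hne (funext fun k => congrArg (A · k) hij), abs_zero]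
    exact hΔ

lemma exists_det_ne_zero_and_card_nontight_rows_le {κ : Type*} {A : Matrix κ ι ℤ} {b : κ → ℤ}
    {u : ι → ℤ} {Δ : ℕ}
    (hA : ∃ f : ι → κ, (A.submatrix f id).det ≠ 0)
    (hΔ : ∀ f : ι → κ, Function.Injective f → |(A.submatrix f id).det| ≤ Δ) (hu : A *ᵥ u ≤ b)
    (hext : ∀ z, A *ᵥ (u + z) ≤ b → A *ᵥ (u - z) ≤ b → z = 0) :
    ∃ (V : Matrix ι ι ℤ) (T : Finset ι), V.det ≠ 0 ∧ #T ≤ Δ / 2 * (Δ - 1) ∧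
      ∀ i ∉ T, ∃ q, (A *ᵥ u) q = b q ∧ A q = V i := by
  have hdet : ∀ W : Matrix ι ι ℤ, (∀ i, W i ∈ Set.range A.row) → |W.det| ≤ Δ := fun _ =>
    abs_det_le_of_forall_mem_range_row (Nat.cast_nonneg Δ) hΔ
  obtain ⟨V, T, hV, hVA, hVT, hcramer⟩ := exists_isMaxBasis
    (R₀ := A.row '' {q | (A *ᵥ u) q = b q}) (Set.image_subset_range _ _) hdet
    (hA.imp' (A.submatrix · id) fun f hf => ⟨fun i => ⟨f i, rfl⟩, hf⟩)
  refine ⟨V, T, hV.det_ne_zero, ?_, hVT⟩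
  by_contra! hlt
  obtain ⟨z, hz, hzT, hzA⟩ :=
    hV.exists_ne_zero_abs_dotProduct_le_one_of_lt_card (hdet V hVA) hlt
  have htight : ∀ q, (A *ᵥ u) q = b q → (A *ᵥ z) q = 0 := fun q hq =>
    hV.dotProduct_eq_zero (hcramer _ ⟨q, hq, rfl⟩) hzT
  have hz_le : ∀ q, |(A *ᵥ z) q| ≤ 1 := fun q => hzA _ ⟨q, rfl⟩
  refine hz (hext z (mulVec_add_le hu htight hz_le) ?_)
  rw [sub_eq_add_neg]
  refine mulVec_add_le hu (fun q hq => ?_) fun q => ?_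
  · rw [mulVec_neg, Pi.neg_apply, htight q hq, neg_zero]
  · rw [mulVec_neg, Pi.neg_apply, abs_neg]
    exact hz_le q

end Lattice

section Polyhedron

lemma eq_zero_of_mem_extremePoints {𝕜 E : Type*} [Field 𝕜] [LinearOrder 𝕜]
    [IsStrictOrderedRing 𝕜] [AddCommGroup E] [Module 𝕜 E] {C : Set E} {y z : E}
    (hy : y ∈ C.extremePoints 𝕜) (hadd : y + z ∈ C) (hsub : y - z ∈ C) : z = 0 := by
  have hmid : y ∈ openSegment 𝕜 (y + z) (y - z) :=
    ⟨1 / 2, 1 / 2, by positivity, by positivity, add_halves 1, by module⟩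
  exact add_eq_left.mp (hy.2 hadd hsub hmid)

lemma isExposed_setOf_forall_eq {𝕜 E ι : Type*} [TopologicalSpace 𝕜] [Ring 𝕜] [PartialOrder 𝕜]
    [IsOrderedRing 𝕜] [ContinuousAdd 𝕜] [AddCommMonoid E] [TopologicalSpace E] [Module 𝕜 E]
    {P : Set E} {t : Finset ι} {l : ι → StrongDual 𝕜 E} {c : ι → 𝕜}
    (hP : ∀ i ∈ t, ∀ x ∈ P, l i x ≤ c i) : IsExposed 𝕜 P {x ∈ P | ∀ i ∈ t, l i x = c i} := by
  classical
  induction t using Finset.induction_on with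
  | empty => simpa using IsExposed.refl P
  | insert i t _ ih =>
    have hi : IsExposed 𝕜 P {x ∈ P | l i x = c i} := by
      rintro ⟨y, hyP, hy⟩
      have hmax : ∀ x ∈ P, l i x ≤ l i y := fun x hx => hy ▸ hP i (mem_insert_self i t) x hx
      refine ⟨l i, Set.ext fun x => and_congr_right fun hx => ?_⟩
      exact ⟨fun h w hw => (hmax w hw).trans_eq (hy.trans h.symm), fun h =>
        ((hmax x hx).antisymm (h y hyP)).trans hy⟩
    convert hi.inter (ih fun j hj => hP j (mem_insert_of_mem hj)) using 1
    ext x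
    constructor
    · rintro ⟨hx, h⟩
      obtain ⟨hxi, hxt⟩ := forall_mem_insert .. |>.mp h
      exact ⟨⟨hx, hxi⟩, hx, hxt⟩
    · rintro ⟨⟨hx, hxi⟩, -, hxt⟩
      exact ⟨hx, (forall_mem_insert ..).mpr ⟨hxi, hxt⟩⟩

variable {ι : Type*} [Fintype ι] [DecidableEq ι]

lemma finrank_direction_affineSpan_le {𝕜 : Type*} [Field 𝕜] {V : Matrix ι ι 𝕜} (hV : V.det ≠ 0)
    {T : Finset ι} {F : Set (ι → 𝕜)} {c : ι → 𝕜} (hF : ∀ x ∈ F, ∀ i ∉ T, (V *ᵥ x) i = c i) :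
    Module.finrank 𝕜 (affineSpan 𝕜 F).direction ≤ #T := by
  have hdir : ∀ i ∉ T, (affineSpan 𝕜 F).direction ≤
      LinearMap.ker (LinearMap.proj i ∘ₗ V.mulVecLin) := by
    intro i hi
    rw [direction_affineSpan, vectorSpan_def, Submodule.span_le]
    rintro _ ⟨x, hx, y, hy, rfl⟩
    simp [mulVec_sub, hF x hx i hi, hF y hy i hi]
  let φ : (affineSpan 𝕜 F).direction →ₗ[𝕜] (T → 𝕜) :=
    LinearMap.funLeft 𝕜 𝕜 (Subtype.val : T → ι) ∘ₗ V.mulVecLin ∘ₗ Submodule.subtype _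
  have hφ : Function.Injective φ := by
    rw [← LinearMap.ker_eq_bot, LinearMap.ker_eq_bot']
    intro x hx
    refine Subtype.ext (eq_zero_of_mulVec_eq_zero hV (funext fun i => ?_))
    by_cases hi : i ∈ T
    · exact congrFun hx ⟨i, hi⟩
    · exact hdir i hi x.2
  simpa using LinearMap.finrank_le_finrank_of_injective hφ


lemma isExposed_setOf_mulVec_eq {ι κ : Type*} [Fintype ι] {P : Set (ι → ℝ)} {t : Finset κ}
    {M : Matrix κ ι ℝ} {c : κ → ℝ} (hP : ∀ i ∈ t, ∀ x ∈ P, (M *ᵥ x) i ≤ c i) :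
    IsExposed ℝ P {x ∈ P | ∀ i ∈ t, (M *ᵥ x) i = c i} :=
  isExposed_setOf_forall_eq
    (l := fun i => LinearMap.toContinuousLinearMap (LinearMap.proj i ∘ₗ M.mulVecLin)) hP

lemma eq_zero_of_intCast_mem_extremePoints {ι : Type*} {P : Set (ι → ℝ)} {u z : ι → ℤ}
    (hu : (fun i => (u i : ℝ)) ∈ Set.extremePoints ℝ
      (convexHull ℝ (P ∩ {x : ι → ℝ | ∀ i, ∃ zi : ℤ, x i = (zi : ℝ)})))
    (hadd : (fun i => ((u + z) i : ℝ)) ∈ P) (hsub : (fun i => ((u - z) i : ℝ)) ∈ P) : z = 0 := by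
  have mem_hull {w : ι → ℤ} (hw : (fun i => (w i : ℝ)) ∈ P) : (fun i => (w i : ℝ)) ∈
      convexHull ℝ (P ∩ {x : ι → ℝ | ∀ i, ∃ zi : ℤ, x i = (zi : ℝ)}) :=
    subset_convexHull ℝ _ ⟨hw, fun i => ⟨w i, rfl⟩⟩
  have hz : (fun i => (z i : ℝ)) = 0 := eq_zero_of_mem_extremePoints hu
    (by simpa [Pi.add_def] using mem_hull hadd) (by simpa [Pi.sub_def] using mem_hull hsub)
  exact funext fun i => Int.cast_eq_zero.mp (congrFun hz i)

lemma map_intCast_mulVec_intCast {ι κ S : Type*} [Fintype ι] [Ring S] (A : Matrix κ ι ℤ)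
    (u : ι → ℤ) (q : κ) :
    (A.map (Int.cast : ℤ → S) *ᵥ fun i => (u i : S)) q = ((A *ᵥ u) q : S) :=
  (RingHom.map_mulVec (Int.castRingHom S) A u q).symm

end Polyhedron

theorem vertices_integer_hull_general {ι κ : Type*} [Fintype ι] [DecidableEq ι] (Δ : ℕ)
    (A : Matrix κ ι ℤ) (hA : ∃ f : ι → κ, (A.submatrix f id).det ≠ 0)
    (hΔ : ∀ f : ι → κ, Function.Injective f → |(A.submatrix f id).det| ≤ (Δ : ℤ)) (b : κ → ℤ)
    (P : Set (ι → ℝ)) (hP : P = {x | ∀ q, (A.map (Int.cast : ℤ → ℝ) *ᵥ x) q ≤ (b q : ℝ)})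
    (y : ι → ℝ)
    (hy : y ∈ Set.extremePoints ℝ
      (convexHull ℝ (P ∩ {x : ι → ℝ | ∀ i, ∃ zi : ℤ, x i = (zi : ℝ)}))) :
    ∃ F : Set (ι → ℝ), IsExposed ℝ P F ∧ y ∈ F ∧
      Module.finrank ℝ (affineSpan ℝ F).direction ≤ Δ / 2 * (Δ - 1) := by
  obtain ⟨hyP, hyZ⟩ := extremePoints_convexHull_subset hy
  choose u hu using hyZ
  obtain rfl : y = fun i => (u i : ℝ) := funext hu
  have memP (w : ι → ℤ) : (fun i => (w i : ℝ)) ∈ P ↔ A *ᵥ w ≤ b := by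
    simp [hP, map_intCast_mulVec_intCast, Pi.le_def]
  obtain ⟨V, T, hV, hT, htight⟩ := exists_det_ne_zero_and_card_nontight_rows_le hA hΔ
    ((memP u).mp hyP) fun z hadd hsub =>
      eq_zero_of_intCast_mem_extremePoints hy ((memP _).mpr hadd) ((memP _).mpr hsub)
  have hle : ∀ i ∈ Tᶜ, ∀ x ∈ P, (V.map (Int.cast : ℤ → ℝ) *ᵥ x) i ≤ (V *ᵥ u) i := by
    intro i hi x hx
    obtain ⟨q, hq, hqi⟩ := htight i (mem_compl.mp hi)
    rw [hP] at hx
    simpa only [mulVec, map_apply, hqi, ← hq] using hx q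
  have hV' : (V.map (Int.cast : ℤ → ℝ)).det ≠ 0 := by
    rwa [← Int.cast_det, Int.cast_ne_zero]
  exact ⟨_, isExposed_setOf_mulVec_eq hle,
    ⟨hyP, fun i _ => map_intCast_mulVec_intCast V u i⟩,
    (finrank_direction_affineSpan_le hV' fun x hx i hi => hx.2 i (mem_compl.mpr hi)).trans hT⟩

/-- Let `Δ ≥ 1`, let `A ∈ ℤ^{m×n}` be `Δ`-modular of full column rank,
`b ∈ ℤ^m`, and `P = {x ∈ ℝ^n : Ax ≤ b}`. Then every vertex (extreme point) of the
convex hull of `P ∩ ℤ^n` lies on a face (exposed face) of `P` of dimension at most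
`⌈(Δ−1)/2⌉·(Δ−1)`. -/
theorem vertices_integer_hull (Δ m n : ℕ) (hΔ : 1 ≤ Δ)
    (A : Matrix (Fin m) (Fin n) ℤ) (hrank : A.rank = n)
    (hub : ∀ f : Fin n → Fin m, Function.Injective f →
      |(A.submatrix f id).det| ≤ (Δ : ℤ))
    (hattain : ∃ f : Fin n → Fin m, Function.Injective f ∧
      |(A.submatrix f id).det| = (Δ : ℤ))
    (b : Fin m → ℤ)
    (P : Set (Fin n → ℝ))
    (hP : P = {x | ∀ i, (A.map (Int.cast : ℤ → ℝ)).mulVec x i ≤ (b i : ℝ)})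
    (y : Fin n → ℝ)
    (hy : y ∈ Set.extremePoints ℝ
      (convexHull ℝ (P ∩ {x : Fin n → ℝ | ∀ i, ∃ zi : ℤ, x i = (zi : ℝ)}))) :
    ∃ F : Set (Fin n → ℝ), IsExposed ℝ P F ∧ y ∈ F ∧
      Module.finrank ℝ (affineSpan ℝ F).direction ≤ ((Δ - 1) + 1) / 2 * (Δ - 1) := by
  rw [Nat.sub_add_cancel hΔ]
  exact vertices_integer_hull_general Δ A
    (hattain.imp fun f hf => abs_pos.mp (hf.2 ▸ Int.natCast_pos.mpr hΔ)) hub b P hP y hy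
end

section
/- Let A ∈ ℤ^{m×n} have full row rank and suppose every m×m submatrix of A has determinant of absolute value at most Δ. Let b ∈ ℤ^m and c ∈ ℤ^n. If the integer program max{c^T x : Ax = b, x ≥ 0, x ∈ ℤ^n} has an optimal solution, then it has an optimal solution z* with |supp(z*)| ≤ m + ⌈(Δ−1)/2⌉·(Δ−1). -/
open scoped Matrix

/-!
An optimal solution `z` of minimal support has dissociated support: a relation with coefficients in
`{-1, 0, 1}` among its columns could be added to `z` until a coordinate vanishes. To bound a
dissociated set, enlarge it to a maximal one, which still has full row rank, and let `B` be a basis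
of its columns with `δ := |det B|` maximal. By Cramer's rule the coordinates of the columns with
respect to `B` form a totally `1`-modular matrix.

Now consider the classes of the other columns in `G = ℤ^m / B ℤ^m`, a group of order `δ`. If `ord γ`
of them had class `γ` or `-γ`, then after changing signs they would all be congruent and their sum
would lie in the lattice `B ℤ^m`. Dissociativity forces any two of them to have opposite coordinates
`±1` in some row, and then total modularity makes all coordinates of their sum lie in `{-1, 0, 1}`,
which is a forbidden relation. Hence fewer than `ord γ` columns have class `±γ`, and summing over
the nonzero `γ` in pairs `±γ` gives at most `⌊δ / 2⌋ (δ - 1)` columns outside `B`.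
-/

namespace IntegerProgram

section TotallyModular

variable {ι κ R : Type*} [CommRing R]

theorem det_submatrix_extend [Fintype ι] [DecidableEq ι] {U : Matrix ι κ R} {e : ι → κ}
    (he : U.submatrix id e = 1) {τ : Type*} [Fintype τ] [DecidableEq τ] {f : τ → ι}
    (hf : f.Injective) (g : τ → κ) :
    (U.submatrix id (Function.extend f g e)).det = (U.submatrix f g).det := by
  classical
  set W := U.submatrix id (Function.extend f g e)
  have hW : ∀ a b, b ∉ Set.range f → W a b = (1 : Matrix ι ι R) a b := fun a b hb => by
    simp only [W, ← he, Matrix.submatrix_apply, Function.extend_apply' _ _ _ hb]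
  have hf_block : (W.toSquareBlockProp (· ∈ Set.range f)).det = (U.submatrix f g).det := by
    rw [← Matrix.det_submatrix_equiv_self (Equiv.ofInjective f hf)]
    congr 1
    ext a b
    simp [W, Matrix.toSquareBlockProp_def, hf.extend_apply]
  have he_block : W.toSquareBlockProp (· ∉ Set.range f) = 1 := by
    ext a b
    simp only [Matrix.toSquareBlockProp_def, Matrix.of_apply, hW _ _ b.2, Matrix.one_apply,
      Subtype.ext_iff]
  have hdet := Matrix.twoBlockTriangular_det' W (· ∈ Set.range f) fun a ha b hb => by
    rw [hW a b hb, Matrix.one_apply_ne (ne_of_mem_of_not_mem ha hb)]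
  rw [he_block, Matrix.det_one, mul_one] at hdet
  rw [hdet, ← hf_block]
  congr!

variable [LinearOrder R]

/-- A matrix is totally `Δ`-modular if all its subdeterminants, of any order, are at most `Δ` in
absolute value. Rows and columns of a square submatrix may be repeated, which only adds vanishing
determinants. -/
def IsTotallyModular (V : Matrix ι κ R) (Δ : R) : Prop :=
  ∀ (k : ℕ) (f : Fin k → ι) (g : Fin k → κ), |(V.submatrix f g).det| ≤ Δ

namespace IsTotallyModular

variable {V : Matrix ι κ R} {Δ : R}

theorem abs_det_submatrix_le (hV : IsTotallyModular V Δ) {τ : Type*} [Fintype τ]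
    [DecidableEq τ] (f : τ → ι) (g : τ → κ) : |(V.submatrix f g).det| ≤ Δ := by
  let σ := (Fintype.equivFin τ).symm
  simpa only [← Matrix.submatrix_submatrix, Matrix.det_submatrix_equiv_self] using
    hV _ (f ∘ σ) (g ∘ σ)

theorem abs_apply_le (hV : IsTotallyModular V Δ) (i : ι) (j : κ) : |V i j| ≤ Δ := by
  simpa using hV 1 (fun _ => i) (fun _ => j)

theorem submatrix (hV : IsTotallyModular V Δ) {ι' κ' : Type*} (f : ι' → ι) (g : κ' → κ) :
    IsTotallyModular (V.submatrix f g) Δ := fun k f' g' => hV k (f ∘ f') (g ∘ g')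

variable [IsStrictOrderedRing R]

theorem mul_column_signs (hV : IsTotallyModular V Δ) {σ : κ → R} (hσ : ∀ j, |σ j| = 1) :
    IsTotallyModular (Matrix.of fun i j => σ j * V i j) Δ := fun k f g => by
  have hdet : ((Matrix.of fun i j => σ j * V i j).submatrix f g).det =
      (∏ a, σ (g a)) * (V.submatrix f g).det :=
    Matrix.det_mul_row (fun a => σ (g a)) (V.submatrix f g)
  rw [hdet, abs_mul, Finset.abs_prod, Finset.prod_eq_one fun a _ => hσ (g a), one_mul]
  exact hV k f g

/-- In row `t` the two columns have opposite entries `±1`, so the minor on rows `t`, `r` is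
`±` the sum of the entries in row `r`. -/
theorem abs_add_le_one (hV : IsTotallyModular V 1) {i j : κ} {t : ι} (hj : |V t j| = 1)
    (hi : V t i = -V t j) (r : ι) : |V r i + V r j| ≤ 1 := by
  have hminor : (V.submatrix ![t, r] ![j, i]).det = V t j * (V r i + V r j) := by
    rw [Matrix.det_fin_two]
    simp only [Matrix.submatrix_apply, Matrix.cons_val_zero, Matrix.cons_val_one, hi]
    ring
  simpa only [hminor, abs_mul, hj, one_mul] using hV 2 ![t, r] ![j, i]

/-- Adding all columns to column `i₀` clears the entries of `i₀` in the rows `l j`, so the minor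
on the rows `l j` and `r` is `±` the sum of row `r`. -/
theorem abs_sum_le_one_of_star [Fintype κ] (hV : IsTotallyModular V 1) {i₀ : κ}
    {l : {j // j ≠ i₀} → ι} (hl : ∀ j, |V (l j) j| = 1) (hl₀ : ∀ j, V (l j) i₀ = -V (l j) j)
    (hl_off : ∀ j k : {j // j ≠ i₀}, k ≠ j → V (l j) k = 0) (r : ι) : |∑ j, V r j| ≤ 1 := by
  classical
  let rows : {j // j ≠ i₀} ⊕ Unit → ι := Sum.elim l fun _ => r
  let cols : {j // j ≠ i₀} ⊕ Unit → κ := Sum.elim Subtype.val fun _ => i₀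
  let M := V.submatrix rows cols
  have hM : M = Matrix.fromBlocks (Matrix.diagonal fun j => V (l j) j)
      (Matrix.of fun j _ => -V (l j) j) (Matrix.of fun _ j => V r j)
      (Matrix.of fun _ _ => V r i₀) := by
    ext (j | _) (k | _)
    · obtain rfl | hjk := eq_or_ne j k
      · simp [M, rows, cols]
      · simp [M, rows, cols, hjk, hl_off j k hjk.symm]
    all_goals simp [M, rows, cols, hl₀]
  have hclear : M * Matrix.fromBlocks 1 (Matrix.of fun _ _ => 1) 0 1 =
      Matrix.fromBlocks (Matrix.diagonal fun j => V (l j) j) 0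
        (Matrix.of fun _ j => V r j) (Matrix.of fun _ _ => ∑ j, V r j) := by
    rw [hM, Matrix.fromBlocks_multiply]
    congr 1 <;> ext j k <;>
      simp [Matrix.mul_apply, Fintype.sum_eq_add_sum_subtype_ne _ i₀, Matrix.diagonal_apply,
        add_comm]
  have hdet : M.det = (∏ j, V (l j) j) * ∑ j, V r j := by
    simpa [Matrix.det_fromBlocks_zero₂₁, Matrix.det_fromBlocks_zero₁₂] using
      congrArg Matrix.det hclear
  calc |∑ j, V r j| = |M.det| := by simp [hdet, abs_mul, Finset.abs_prod, hl]
    _ ≤ 1 := hV.abs_det_submatrix_le rows cols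

/-- If any two columns have opposite entries `±1` in some row, then the minors of order two make the
rows witnessing this for a fixed column `i₀` vanish elsewhere, so that they form a star. -/
theorem abs_sum_le_one_of_opposite [Fintype κ] (hV : IsTotallyModular V 1)
    (hopp : ∀ i j, i ≠ j → ∃ t, |V t j| = 1 ∧ V t i = -V t j) (r : ι) : |∑ j, V r j| ≤ 1 := by
  obtain _ | ⟨⟨i₀⟩⟩ := isEmpty_or_nonempty κ
  · simp
  choose l hl hl₀ using fun j : {j // j ≠ i₀} => hopp i₀ j j.2.symm
  refine hV.abs_sum_le_one_of_star hl hl₀ (fun j k hkj => ?_) r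
  have hpair : ∀ i, i ≠ (k : κ) → |V (l j) i + V (l j) k| ≤ 1 := fun i hi =>
    have ⟨t, htk, hti⟩ := hopp i k hi
    hV.abs_add_le_one htk hti (l j)
  have hj := abs_le.1 (hpair j (Subtype.coe_ne_coe.2 hkj.symm))
  have hi₀ := abs_le.1 (hpair i₀ k.2.symm)
  rw [hl₀ j] at hi₀
  rcases eq_or_eq_neg_of_abs_eq (hl j) with h | h <;> rw [h] at hj hi₀ <;> linarith

/-- Entries lie in `[-1, 1]`, so an integral difference exceeding `1` in absolute value is `±2`
and comes from the entries `1` and `-1`. -/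
theorem abs_eq_one_and_eq_neg_of_one_lt_abs_sub (hV : IsTotallyModular V 1) {r : ι} {i j : κ}
    {k : ℤ} (hk : V r i - V r j = k) (hfar : 1 < |V r i - V r j|) :
    |V r j| = 1 ∧ V r i = -V r j := by
  have hi := abs_le.1 (hV.abs_apply_le r i)
  have hj := abs_le.1 (hV.abs_apply_le r j)
  rw [hk] at hfar
  have hk_abs : 2 ≤ |k| := by exact_mod_cast hfar
  rcases le_abs.1 hk_abs with h | h
  · have hk_two : (2 : R) ≤ k := by exact_mod_cast h
    have hj_eq : V r j = -1 := by linarith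
    exact ⟨by simp [hj_eq], by linarith⟩
  · have hk_two : (2 : R) ≤ -k := by exact_mod_cast h
    have hj_eq : V r j = 1 := by linarith
    exact ⟨by simp [hj_eq], by linarith⟩

theorem abs_sum_le_one_of_far [Fintype κ] (hV : IsTotallyModular V 1)
    (hint : ∀ i j r, ∃ k : ℤ, V r i - V r j = k)
    (hfar : ∀ i j, i ≠ j → ∃ r, 1 < |V r i - V r j|) (r : ι) : |∑ j, V r j| ≤ 1 := by
  refine hV.abs_sum_le_one_of_opposite (fun i j hij => ?_) r
  obtain ⟨t, ht⟩ := hfar i j hij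
  obtain ⟨k, hk⟩ := hint i j t
  exact ⟨t, hV.abs_eq_one_and_eq_neg_of_one_lt_abs_sub hk ht⟩

end IsTotallyModular
end TotallyModular

section Dissociated

variable {ι κ τ : Type*} [Fintype κ] [Fintype τ] {A : Matrix ι κ ℤ}

/-- The columns of `A` with index in `S` are dissociated if they satisfy no nontrivial linear
relation with coefficients in `{-1, 0, 1}`. -/
def Dissociated (A : Matrix ι κ ℤ) (S : Set κ) : Prop :=
  ∀ x : κ → ℤ, Function.support x ⊆ S → (∀ j, |x j| ≤ 1) → A *ᵥ x = 0 → x = 0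

theorem mulVec_extend_zero (A : Matrix ι κ ℤ) {g : τ → κ} (hg : g.Injective) (x : τ → ℤ) :
    A *ᵥ Function.extend g x 0 = A.submatrix id g *ᵥ x := by
  ext r
  exact (Fintype.sum_of_injective g hg _ _
    (fun j hj => by simp [Function.extend_apply' _ _ _ hj])
    (fun i => by simp [hg.extend_apply])).symm

namespace Dissociated

theorem submatrix {S : Set κ} (hA : Dissociated A S) {g : τ → κ} (hg : g.Injective)
    (hgS : ∀ i, g i ∈ S) : Dissociated (A.submatrix id g) Set.univ := fun x _ hx hAx => by
  have hext : Function.extend g x 0 = 0 := by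
    refine hA _ (fun j hj => ?_) (fun j => ?_) (by rw [mulVec_extend_zero A hg, hAx])
    · by_contra hjS
      exact hj (Function.extend_apply' _ _ _ fun ⟨i, hi⟩ => hjS (hi ▸ hgS i))
    · by_cases hj : ∃ i, g i = j
      · obtain ⟨i, rfl⟩ := hj
        rw [hg.extend_apply]
        exact hx i
      · simp [Function.extend_apply' _ _ _ hj]
  ext i
  rw [← hg.extend_apply x 0 i, hext]
  rfl

theorem mul_column_signs (hA : Dissociated A Set.univ) {σ : κ → ℤ} (hσ : ∀ j, |σ j| = 1) :
    Dissociated (Matrix.of fun i j => σ j * A i j) Set.univ := fun x _ hx hAx => by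
  have hσx : σ * x = 0 := by
    refine hA _ (Set.subset_univ _) (fun j => by simpa [abs_mul, hσ] using hx j) ?_
    rw [← hAx]
    ext i
    simp only [Matrix.mulVec, dotProduct, Matrix.of_apply, Pi.mul_apply]
    exact Finset.sum_congr rfl fun j _ => by ring
  ext j
  have hσ_ne : σ j ≠ 0 := fun h => by simpa [h] using hσ j
  simpa [hσ_ne] using congrFun hσx j

end Dissociated
end Dissociated

section Coordinates

variable {ι κ τ : Type*} [Fintype ι] [DecidableEq ι]

/-- The rational coordinates of the columns of `C` in the basis formed by the columns of `B`; this
is junk unless `B.det ≠ 0`. -/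
noncomputable def coords (B : Matrix ι ι ℤ) (C : Matrix ι τ ℤ) : Matrix ι τ ℚ :=
  (B.map (Int.cast : ℤ → ℚ))⁻¹ * C.map (Int.cast : ℤ → ℚ)

/-- The sublattice of `ℤ^ι` generated by the columns of `B`. -/
abbrev columnLattice (B : Matrix ι ι ℤ) : Submodule ℤ (ι → ℤ) :=
  LinearMap.range B.mulVecLin

variable {B : Matrix ι ι ℤ}

theorem natCard_quotient_columnLattice (hB : B.det ≠ 0) :
    Nat.card ((ι → ℤ) ⧸ columnLattice B) = B.det.natAbs := by
  have hinj : Function.Injective B.mulVecLin := Matrix.mulVec_injective_of_det_ne_zero hB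
  rw [← Submodule.natAbs_det_equiv _ (LinearEquiv.ofInjective B.mulVecLin hinj),
    ← LinearMap.det_toLin' B]
  congr 2

theorem isUnit_det_map_intCast (hB : B.det ≠ 0) : IsUnit (B.map (Int.cast : ℤ → ℚ)).det := by
  rw [← Int.cast_det, isUnit_iff_ne_zero]
  exact_mod_cast hB

theorem coords_self (hB : B.det ≠ 0) : coords B B = 1 :=
  Matrix.nonsing_inv_mul _ (isUnit_det_map_intCast hB)

theorem coords_submatrix (B : Matrix ι ι ℤ) (C : Matrix ι κ ℤ) (g : τ → κ) :
    coords B (C.submatrix id g) = (coords B C).submatrix id g := rfl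

theorem coords_mul_column (B : Matrix ι ι ℤ) (C : Matrix ι τ ℤ) (σ : τ → ℤ) :
    coords B (Matrix.of fun i j => σ j * C i j) =
      Matrix.of fun i j => (σ j : ℚ) * coords B C i j := by
  ext i j
  simp only [coords, Matrix.mul_apply, Matrix.of_apply, Matrix.map_apply, Finset.mul_sum]
  exact Finset.sum_congr rfl fun k _ => by push_cast; ring

theorem det_coords (B C : Matrix ι ι ℤ) : (coords B C).det = C.det / B.det := by
  rw [coords, Matrix.det_mul, Matrix.det_nonsing_inv, ← Int.cast_det, ← Int.cast_det,
    Ring.inverse_eq_inv', inv_mul_eq_div]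

theorem coords_mulVec [Fintype τ] (hB : B.det ≠ 0) {C : Matrix ι τ ℤ} {x : τ → ℤ} {y : ι → ℤ}
    (hxy : C *ᵥ x = B *ᵥ y) : coords B C *ᵥ (fun j => (x j : ℚ)) = fun i => (y i : ℚ) := by
  have hcast : C.map (Int.cast : ℤ → ℚ) *ᵥ (fun j => (x j : ℚ)) =
      B.map (Int.cast : ℤ → ℚ) *ᵥ fun i => (y i : ℚ) := by
    ext r
    have hr := congrArg (Int.cast : ℤ → ℚ) (congrFun hxy r)
    simpa [Matrix.mulVec, dotProduct] using hr
  rw [coords, ← Matrix.mulVec_mulVec, hcast, Matrix.mulVec_mulVec,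
    Matrix.nonsing_inv_mul _ (isUnit_det_map_intCast hB), Matrix.one_mulVec]

theorem isTotallyModular_coords {A : Matrix ι κ ℤ} {e : ι → κ} (he : (A.submatrix id e).det ≠ 0)
    (hmax : ∀ g : ι → κ, |(A.submatrix id g).det| ≤ |(A.submatrix id e).det|) :
    IsTotallyModular (coords (A.submatrix id e) A) 1 := fun k f g => by
  by_cases hf : f.Injective
  · have hcoords : (coords (A.submatrix id e) A).submatrix id e = 1 := coords_self he
    rw [← det_submatrix_extend hcoords hf g, ← coords_submatrix, det_coords, abs_div,
      div_le_one (by simpa using he)]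
    exact_mod_cast hmax _
  · obtain ⟨a, b, hab, hne⟩ := Function.not_injective_iff.1 hf
    rw [Matrix.det_zero_of_row_eq hne (by ext; simp [hab])]
    simp

variable [Fintype τ] {C : Matrix ι τ ℤ}

theorem Dissociated.eq_zero_of_abs_coords_le_one
    (hBC : Dissociated (Matrix.fromCols B C) Set.univ) (hB : B.det ≠ 0) {x : τ → ℤ}
    (hx : ∀ j, |x j| ≤ 1) (hCx : C *ᵥ x ∈ columnLattice B)
    (hcoords : ∀ r, |(coords B C *ᵥ fun j => (x j : ℚ)) r| ≤ 1) : x = 0 := by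
  obtain ⟨y, hy⟩ := hCx
  change B *ᵥ y = C *ᵥ x at hy
  rw [coords_mulVec hB hy.symm] at hcoords
  have hy_le : ∀ i, |(y i : ℚ)| ≤ 1 := hcoords
  norm_cast at hy_le
  have hyx : Sum.elim (-y) x = 0 := by
    refine hBC _ (Set.subset_univ _) ?_ ?_
    · rintro (i | j)
      · simpa using hy_le i
      · exact hx j
    · rw [Matrix.fromCols_mulVec_sumElim, Matrix.mulVec_neg, hy, neg_add_cancel]
  ext j
  exact congrFun hyx (Sum.inr j)

/-- Applied to `Pi.single i 1 - Pi.single j 1`, dissociativity forces columns `i` and `j` to have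
coordinates far apart in some row. This makes the coordinates of the sum of all columns small, so
that dissociativity applies to the relation `1`. -/
theorem Dissociated.isEmpty_of_congruent (hBC : Dissociated (Matrix.fromCols B C) Set.univ)
    (hB : B.det ≠ 0) (hmod : IsTotallyModular (coords B C) 1)
    (hcongr : ∀ i j, C.col i - C.col j ∈ columnLattice B)
    (hsum : ∑ j, C.col j ∈ columnLattice B) : IsEmpty τ := by
  classical
  have hdiff : ∀ i j r, (coords B C *ᵥ fun k => ((Pi.single i 1 - Pi.single j 1 : τ → ℤ) k : ℚ)) r =
      coords B C r i - coords B C r j := fun i j r => by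
    simp [Matrix.mulVec, dotProduct, mul_sub, Pi.single_apply]
  have hmem : ∀ i j, C *ᵥ (Pi.single i 1 - Pi.single j 1) ∈ columnLattice B := fun i j => by
    rw [Matrix.mulVec_sub, Matrix.mulVec_single_one, Matrix.mulVec_single_one]
    exact hcongr i j
  have hsmall : ∀ r, |∑ j, coords B C r j| ≤ 1 := by
    refine hmod.abs_sum_le_one_of_far (fun i j r => ?_) fun i j hij => ?_
    · obtain ⟨y, hy⟩ := hmem i j
      exact ⟨y r, by rw [← hdiff, coords_mulVec hB hy.symm]⟩
    · by_contra! hnear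
      have hzero := hBC.eq_zero_of_abs_coords_le_one hB (fun k => ?_) (hmem i j)
        fun r => by rw [hdiff]; exact hnear r
      · simpa [hij] using congrFun hzero i
      · simp only [Pi.sub_apply, Pi.single_apply]
        split_ifs <;> simp
  have hone := hBC.eq_zero_of_abs_coords_le_one hB (x := 1) (by simp)
    (by rwa [Matrix.mulVec_one]) fun r => by simpa [Matrix.mulVec, dotProduct] using hsmall r
  exact ⟨fun j => one_ne_zero (congrFun hone j)⟩

end Coordinates

section Classes

variable {ι κ : Type*} [Fintype ι] [DecidableEq ι] {A : Matrix ι κ ℤ} {e : ι → κ}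

/-- The class of a column of `A` modulo the lattice generated by the columns selected by `e`. -/
abbrev columnClass (A : Matrix ι κ ℤ) (e : ι → κ) (j : κ) :
    (ι → ℤ) ⧸ columnLattice (A.submatrix id e) :=
  (columnLattice (A.submatrix id e)).mkQ (A.col j)

theorem injective_of_det_submatrix_ne_zero (he : (A.submatrix id e).det ≠ 0) : e.Injective :=
  fun i j hij => by
    by_contra hne
    exact he (Matrix.det_zero_of_column_eq hne fun r => by simp [hij])

variable [Fintype κ]

theorem Dissociated.eq_empty_of_signed_columnClass_eq (hA : Dissociated A Set.univ)
    (he : (A.submatrix id e).det ≠ 0)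
    (hmax : ∀ g : ι → κ, |(A.submatrix id g).det| ≤ |(A.submatrix id e).det|)
    {Q : Finset κ} (hQ : ∀ i, e i ∉ Q) {σ : κ → ℤ} (hσ : ∀ j, |σ j| = 1)
    {γ : (ι → ℤ) ⧸ columnLattice (A.submatrix id e)}
    (hγ : ∀ j ∈ Q, σ j • columnClass A e j = γ) (hcard : Q.card • γ = 0) : Q = ∅ := by
  let B := A.submatrix id e
  let C : Matrix ι Q ℤ := Matrix.of fun i j => σ j * A i j
  have hC : ∀ j, (columnLattice B).mkQ (C.col j) = γ := fun j => by
    rw [← hγ j j.2, ← map_smul]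
    rfl
  have hcols : (Sum.elim e Subtype.val : ι ⊕ Q → κ).Injective :=
    (injective_of_det_submatrix_ne_zero he).sumElim Subtype.val_injective
      fun i j hij => hQ i (hij ▸ j.2)
  have hBC : Dissociated (Matrix.fromCols B C) Set.univ := by
    convert (hA.submatrix hcols fun _ => Set.mem_univ _).mul_column_signs
      (σ := Sum.elim 1 fun j => σ j) (by rintro (i | j) <;> simp [hσ]) using 1
    ext i (k | j) <;> simp [B, C]
  have hmod : IsTotallyModular (coords B C) 1 := by
    have hsigned := ((isTotallyModular_coords he hmax).submatrix id
      (Subtype.val : Q → κ)).mul_column_signs (σ := fun j => (σ j : ℚ))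
      fun j => by exact_mod_cast hσ j
    rwa [← coords_submatrix, ← coords_mul_column] at hsigned
  have hempty := hBC.isEmpty_of_congruent he hmod
    (fun i j => by rw [← Submodule.Quotient.eq]; exact (hC i).trans (hC j).symm)
    (by
      rw [← Submodule.Quotient.mk_eq_zero, ← Submodule.mkQ_apply, map_sum]
      simpa [hC] using hcard)
  exact Finset.isEmpty_coe_sort.1 hempty

theorem finite_quotient_columnLattice {B : Matrix ι ι ℤ} (hB : B.det ≠ 0) :
    Finite ((ι → ℤ) ⧸ columnLattice B) :=
  Nat.finite_of_card_ne_zero (by simpa [natCard_quotient_columnLattice hB] using hB)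

open scoped Classical in
theorem Dissociated.card_columnClass_eq_or_eq_neg_lt (hA : Dissociated A Set.univ)
    (he : (A.submatrix id e).det ≠ 0)
    (hmax : ∀ g : ι → κ, |(A.submatrix id g).det| ≤ |(A.submatrix id e).det|)
    (γ : (ι → ℤ) ⧸ columnLattice (A.submatrix id e)) :
    ((Finset.univ.image e)ᶜ.filter fun j => columnClass A e j = γ ∨ columnClass A e j = -γ).card <
      addOrderOf γ := by
  by_contra! hcard
  obtain ⟨Q, hQ, hQcard⟩ := Finset.exists_subset_card_eq hcard
  have hempty : Q = ∅ := by
    refine hA.eq_empty_of_signed_columnClass_eq he hmax (γ := γ)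
      (σ := fun j => if columnClass A e j = γ then 1 else -1) (fun i hi => ?_) (fun j => ?_)
      (fun j hj => ?_) (by rw [hQcard, addOrderOf_nsmul_eq_zero])
    · simpa using Finset.mem_of_mem_filter _ (hQ hi)
    · split_ifs <;> simp
    · split_ifs with hj_eq
      · rw [one_smul, hj_eq]
      · rw [((Finset.mem_filter.1 (hQ hj)).2.resolve_left hj_eq), neg_one_smul, neg_neg]
  have := finite_quotient_columnLattice he
  rw [hempty, Finset.card_empty] at hQcard
  exact (addOrderOf_pos γ).ne hQcard

end Classes

section Counting

open scoped Classical in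
theorem card_fiber_add_card_fiber_neg_le {G κ : Type*} [AddCommGroup G] [Finite G] {N : Finset κ}
    {c : κ → G} (hc : ∀ γ, (N.filter fun j => c j = γ ∨ c j = -γ).card < addOrderOf γ) {γ : G}
    (hγ : γ ≠ 0) :
    (N.filter fun j => c j = γ).card + (N.filter fun j => c j = -γ).card ≤
      2 * (Nat.card G / 2) := by
  have hlt := hc γ
  have hle : addOrderOf γ ≤ Nat.card G := addOrderOf_le_card
  by_cases hneg : γ = -γ
  · have horder : addOrderOf γ ≤ 2 := by
      refine addOrderOf_le_of_nsmul_eq_zero two_pos ?_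
      rw [two_nsmul]
      exact add_eq_zero_iff_eq_neg.2 hneg
    have htwo : 1 < addOrderOf γ :=
      lt_of_le_of_ne (addOrderOf_pos γ) (Ne.symm (mt AddMonoid.addOrderOf_eq_one_iff.1 hγ))
    simp only [← hneg, or_self] at hlt ⊢
    omega
  · rw [Finset.filter_or, Finset.card_union_of_disjoint
      (Finset.disjoint_filter.2 fun j _ h h' => hneg (h.symm.trans h'))] at hlt
    omega

open scoped Classical in
theorem card_le_of_card_fiber_lt_addOrderOf {G κ : Type*} [AddCommGroup G] [Finite G]
    {N : Finset κ} {c : κ → G}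
    (hc : ∀ γ, (N.filter fun j => c j = γ ∨ c j = -γ).card < addOrderOf γ) :
    N.card ≤ Nat.card G / 2 * (Nat.card G - 1) := by
  have := Fintype.ofFinite G
  let f : G → ℕ := fun γ => (N.filter fun j => c j = γ).card
  have hf_zero : f 0 = 0 := by simpa [f] using hc 0
  have hN : N.card = ∑ γ, f γ := Finset.card_eq_sum_card_fiberwise (by simp)
  have hN_erase : N.card = ∑ γ ∈ Finset.univ.erase 0, f γ := by
    rw [hN, ← Finset.sum_erase _ hf_zero]
  have hN_neg : N.card = ∑ γ ∈ Finset.univ.erase 0, f (-γ) := by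
    rw [hN, ← Equiv.sum_comp (Equiv.neg G) f]
    exact (Finset.sum_erase _ (by simp [hf_zero])).symm
  have htwice : 2 * N.card ≤ 2 * (Nat.card G / 2 * (Nat.card G - 1)) := by
    calc 2 * N.card = ∑ γ ∈ Finset.univ.erase (0 : G), (f γ + f (-γ)) := by
          rw [two_mul, Finset.sum_add_distrib, ← hN_erase, ← hN_neg]
      _ ≤ (Finset.univ.erase (0 : G)).card • (2 * (Nat.card G / 2)) :=
          Finset.sum_le_card_nsmul _ _ _ fun γ hγ =>
            card_fiber_add_card_fiber_neg_le hc (Finset.ne_of_mem_erase hγ)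
      _ = 2 * (Nat.card G / 2 * (Nat.card G - 1)) := by
          rw [Finset.card_erase_of_mem (Finset.mem_univ _), Finset.card_univ,
            ← Nat.card_eq_fintype_card, smul_eq_mul]
          ring
  exact Nat.le_of_mul_le_mul_left htwice two_pos

theorem Dissociated.card_le {ι κ : Type*} [Fintype ι] [DecidableEq ι] [Fintype κ]
    {A : Matrix ι κ ℤ} {e : ι → κ} (hA : Dissociated A Set.univ)
    (he : (A.submatrix id e).det ≠ 0)
    (hmax : ∀ g : ι → κ, |(A.submatrix id g).det| ≤ |(A.submatrix id e).det|) :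
    Fintype.card κ ≤ Fintype.card ι +
      (A.submatrix id e).det.natAbs / 2 * ((A.submatrix id e).det.natAbs - 1) := by
  classical
  have := finite_quotient_columnLattice he
  have hN := card_le_of_card_fiber_lt_addOrderOf (hA.card_columnClass_eq_or_eq_neg_lt he hmax)
  rw [natCard_quotient_columnLattice he] at hN
  calc Fintype.card κ = (Finset.univ.image e).card + (Finset.univ.image e)ᶜ.card :=
        (Finset.card_add_card_compl _).symm
    _ ≤ _ := add_le_add Finset.card_image_le hN

end Counting

section Rank

variable {ι κ R : Type*} [Fintype ι] [CommRing R] {A : Matrix ι κ R}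

theorem linearIndependent_row_iff_vecMul_eq_zero :
    LinearIndependent R A.row ↔ ∀ y, y ᵥ* A = 0 → y = 0 := by
  rw [← Matrix.vecMul_injective_iff, ← Matrix.coe_vecMulLinear, injective_iff_map_eq_zero]
  rfl

variable [IsDomain R]

theorem linearIndependent_row_of_rank_eq_card [Fintype κ] (hA : A.rank = Fintype.card ι) :
    LinearIndependent R A.row := by
  classical
  refine linearIndependent_row_iff_vecMul_eq_zero.2 fun y hy => ?_
  by_contra hy_ne
  obtain ⟨f, hf⟩ := exists_linearIndependent_of_le_finrank hA.ge
  let ε := Fintype.equivFin ι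
  let M : Matrix ι ι R := Matrix.of fun i k => (f (ε k)).1 i
  have hM : LinearIndependent R M.col :=
    (hf.comp ε ε.injective).map' _ (Submodule.ker_subtype _)
  have hyM : y ᵥ* M = 0 := by
    ext k
    obtain ⟨x, hx⟩ := (f (ε k)).2
    calc y ⬝ᵥ (f (ε k)).1 = (y ᵥ* A) ⬝ᵥ x := by
          rw [← hx, Matrix.mulVecLin_apply, Matrix.dotProduct_mulVec]
      _ = 0 := by rw [hy, zero_dotProduct]
  have hdet : M.det = 0 := Matrix.exists_vecMul_eq_zero_iff.1 ⟨y, hy_ne, hyM⟩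
  obtain ⟨v, hv_ne, hv⟩ := Matrix.exists_mulVec_eq_zero_iff.2 hdet
  exact hv_ne (Matrix.mulVec_injective_iff.2 hM (hv.trans M.mulVec_zero.symm))

theorem exists_det_submatrix_ne_zero [Finite κ] [DecidableEq ι] (hA : LinearIndependent R A.row) :
    ∃ e : ι → κ, (A.submatrix id e).det ≠ 0 := by
  have := Fintype.ofFinite κ
  let K := FractionRing R
  let AK := A.map (algebraMap R K)
  have hrow : LinearIndependent K AK.row := by
    rw [← LinearIndependent.iff_fractionRing R K]
    refine hA.map' ((Algebra.linearMap R K).compLeft κ) (LinearMap.ker_eq_bot.2 ?_)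
    exact (IsFractionRing.injective R K).comp_left
  have hspan : Submodule.span K (Set.range AK.col) = ⊤ := by
    refine Submodule.eq_top_of_finrank_eq ?_
    rw [← Matrix.rank_eq_finrank_span_cols, hrow.rank_matrix, Module.finrank_fintype_fun_eq_card]
  obtain ⟨τ, a, -, hsub, hcol⟩ := exists_linearIndependent' K AK.col
  let basis := Module.Basis.mk hcol (hsub.trans hspan).ge
  let ε : ι ≃ τ := (Pi.basisFun K ι).indexEquiv basis
  refine ⟨a ∘ ε, fun hdet => ?_⟩
  have hcol' : LinearIndependent K (AK.submatrix id (a ∘ ε)).col := hcol.comp ε ε.injective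
  have hmap : (AK.submatrix id (a ∘ ε)).det = algebraMap R K (A.submatrix id (a ∘ ε)).det :=
    ((algebraMap R K).map_det _).symm
  rw [Matrix.linearIndependent_cols_iff_isUnit, Matrix.isUnit_iff_isUnit_det, hmap, hdet,
    map_zero] at hcol'
  exact not_isUnit_zero hcol'

end Rank

section MaximalDissociated

variable {ι κ : Type*} [Fintype κ] {A : Matrix ι κ ℤ}

theorem exists_mulVec_eq_zero_of_maximal_dissociated {T : Set κ} (hT : Maximal (Dissociated A) T)
    {j : κ} (hj : j ∉ T) :
    ∃ x : κ → ℤ, Function.support x ⊆ insert j T ∧ A *ᵥ x = 0 ∧ x j ≠ 0 := by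
  by_contra! hzero
  refine hj (hT.2 (y := insert j T) (fun x hxT hx hAx => hT.1 x (fun k hk => ?_) hx hAx)
    (Set.subset_insert j T) (Set.mem_insert j T))
  exact (hxT hk).resolve_left fun hkj => hk (hkj ▸ hzero x hxT hAx)

theorem linearIndependent_row_submatrix_of_maximal_dissociated [Finite ι]
    (hA : LinearIndependent ℤ A.row) {T : Set κ} (hT : Maximal (Dissociated A) T) :
    LinearIndependent ℤ (A.submatrix id (Subtype.val : T → κ)).row := by
  have := Fintype.ofFinite ι
  refine linearIndependent_row_iff_vecMul_eq_zero.2 fun y hy =>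
    linearIndependent_row_iff_vecMul_eq_zero.1 hA y ?_
  have hyT : ∀ k ∈ T, (y ᵥ* A) k = 0 := fun k hk => congrFun hy ⟨k, hk⟩
  ext j
  by_cases hj : j ∈ T
  · exact hyT j hj
  obtain ⟨x, hxT, hAx, hxj⟩ := exists_mulVec_eq_zero_of_maximal_dissociated hT hj
  have hvanish : ∀ k ≠ j, (y ᵥ* A) k * x k = 0 := fun k hk => by
    by_cases hkT : k ∈ T
    · rw [hyT k hkT, zero_mul]
    · rw [Function.notMem_support.1 fun h => (hxT h).elim hk hkT, mul_zero]
  have hdot : (y ᵥ* A) j * x j = 0 := by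
    calc (y ᵥ* A) j * x j = (y ᵥ* A) ⬝ᵥ x := (Fintype.sum_eq_single j hvanish).symm
      _ = 0 := by rw [← Matrix.dotProduct_mulVec, hAx, dotProduct_zero]
  exact (mul_eq_zero.1 hdot).resolve_right hxj

theorem Dissociated.ncard_le [Fintype ι] [DecidableEq ι] (hrank : A.rank = Fintype.card ι) {Δ : ℕ}
    (hub : ∀ g : ι → κ, g.Injective → |(A.submatrix id g).det| ≤ Δ) {S : Set κ}
    (hS : Dissociated A S) : S.ncard ≤ Fintype.card ι + (Δ - 1 + 1) / 2 * (Δ - 1) := by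
  classical
  obtain ⟨T, hST, hT⟩ := Finite.exists_le_maximal hS
  let C := A.submatrix id (Subtype.val : T → κ)
  obtain ⟨e₀, he₀⟩ := exists_det_submatrix_ne_zero
    (linearIndependent_row_submatrix_of_maximal_dissociated
      (linearIndependent_row_of_rank_eq_card hrank) hT)
  have : Nonempty (ι → T) := ⟨e₀⟩
  obtain ⟨e, hmax⟩ := Finite.exists_max fun g : ι → T => |(C.submatrix id g).det|
  have he : (C.submatrix id e).det ≠ 0 := abs_pos.1 ((abs_pos.2 he₀).trans_le (hmax e₀))
  have hdet : (C.submatrix id e).det.natAbs ≤ Δ := by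
    have hle := hub _ (Subtype.val_injective.comp (injective_of_det_submatrix_ne_zero he))
    rw [Int.abs_eq_natAbs] at hle
    exact_mod_cast hle
  calc S.ncard ≤ T.ncard := Set.ncard_le_ncard hST
    _ = Fintype.card T := (Nat.card_eq_fintype_card (α := T))
    _ ≤ _ := (hT.1.submatrix Subtype.val_injective Subtype.property).card_le he hmax
    _ ≤ Fintype.card ι + (Δ - 1 + 1) / 2 * (Δ - 1) := by
      gcongr
      exact hdet.trans le_tsub_add

end MaximalDissociated

section Optimal

theorem exists_nonneg_add_smul_eq_zero {κ : Type*} [Finite κ] {x z : κ → ℤ}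
    (hz : ∀ i, 0 ≤ z i) (hx : ∀ i, -1 ≤ x i) (hneg : ∃ i, x i < 0) :
    ∃ j, x j < 0 ∧ (z + z j • x) j = 0 ∧ ∀ i, 0 ≤ (z + z j • x) i := by
  obtain ⟨j, hj, hmin⟩ := Set.exists_min_image {i | x i < 0} z (Set.toFinite _) hneg
  have hx_eq : ∀ i, x i < 0 → x i = -1 := fun i hi => le_antisymm (Int.le_sub_one_of_lt hi) (hx i)
  refine ⟨j, hj, by simp [hx_eq j hj], fun i => ?_⟩
  simp only [Pi.add_apply, Pi.smul_apply, smul_eq_mul]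
  by_cases hi : x i < 0
  · rw [hx_eq i hi, mul_neg_one, ← sub_eq_add_neg]
    exact sub_nonneg.2 (hmin i hi)
  · exact add_nonneg (hz i) (mul_nonneg (hz j) (not_lt.1 hi))

variable {ι κ M : Type*} [Fintype κ] [AddCommGroup M] [PartialOrder M]
  {A : Matrix ι κ ℤ} {b : ι → ℤ} {f : (κ → ℤ) →+ M} {x z : κ → ℤ}

/-- `z` is an optimal solution of the integer program `max {f x : A x = b, x ≥ 0}`. The additive
objective `f` may take values in any ordered group, which covers real costs. -/
def IsOptimal (A : Matrix ι κ ℤ) (b : ι → ℤ) (f : (κ → ℤ) →+ M) (z : κ → ℤ) : Prop :=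
  (A *ᵥ z = b ∧ ∀ i, 0 ≤ z i) ∧ ∀ x : κ → ℤ, A *ᵥ x = b → (∀ i, 0 ≤ x i) → f x ≤ f z

namespace IsOptimal

theorem objective_eq_zero [IsOrderedAddMonoid M] (hz : IsOptimal A b f z) (hAx : A *ᵥ x = 0)
    (hxz : ∀ j, |x j| ≤ z j) : f x = 0 := by
  obtain ⟨⟨hAz, -⟩, hmax⟩ := hz
  have hadd := hmax (z + x) (by rw [Matrix.mulVec_add, hAx, hAz, add_zero])
    fun j => neg_le_iff_add_nonneg'.1 (abs_le.1 (hxz j)).1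
  have hsub := hmax (z - x) (by rw [Matrix.mulVec_sub, hAx, hAz, sub_zero])
    fun j => sub_nonneg.2 (abs_le.1 (hxz j)).2
  rw [map_add] at hadd
  rw [map_sub] at hsub
  exact le_antisymm (by simpa using hadd) (by simpa using hsub)

theorem nonneg_of_minimal_support (hz : MinimalFor (IsOptimal A b f) Function.support z)
    (hAx : A *ᵥ x = 0) (hfx : f x = 0) (hxz : Function.support x ⊆ Function.support z)
    (hx : ∀ j, -1 ≤ x j) (j : κ) : 0 ≤ x j := by
  obtain ⟨⟨⟨hAz, hz_nonneg⟩, hmax⟩, hmin⟩ := hz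
  by_contra! hj_neg
  obtain ⟨k, hk_neg, hk_zero, hnonneg⟩ :=
    exists_nonneg_add_smul_eq_zero hz_nonneg hx ⟨j, hj_neg⟩
  have hopt : IsOptimal A b f (z + z k • x) := by
    refine ⟨⟨?_, hnonneg⟩, fun y hy hy_nonneg => ?_⟩
    · rw [Matrix.mulVec_add, Matrix.mulVec_smul, hAx, smul_zero, add_zero, hAz]
    · rw [map_add, map_zsmul, hfx, smul_zero, add_zero]
      exact hmax y hy hy_nonneg
  have hsupport : Function.support (z + z k • x) ⊆ Function.support z :=
    (Function.support_add _ _).trans (Set.union_subset subset_rfl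
      ((Function.support_const_smul_subset _ _).trans hxz))
  exact hmin hopt hsupport (hxz hk_neg.ne) hk_zero

theorem dissociated_support [IsOrderedAddMonoid M]
    (hz : MinimalFor (IsOptimal A b f) Function.support z) :
    Dissociated A (Function.support z) := fun x hxz hx hAx => by
  have hz_nonneg := hz.1.1.2
  have hx_le : ∀ j, |x j| ≤ z j := fun j => by
    rcases (hz_nonneg j).eq_or_lt with h | h
    · rw [Function.notMem_support.1 fun hj => hxz hj h.symm, ← h, abs_zero]
    · exact (hx j).trans h
  have hfx := hz.1.objective_eq_zero hAx hx_le
  have hx_nonneg := nonneg_of_minimal_support hz hAx hfx hxz fun j => (abs_le.1 (hx j)).1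
  have hx_nonpos := nonneg_of_minimal_support (x := -x) hz
    (by rw [Matrix.mulVec_neg, hAx, neg_zero]) (by rw [map_neg, hfx, neg_zero])
    (by rwa [Function.support_neg]) fun j => neg_le_neg (abs_le.1 (hx j)).2
  ext j
  exact le_antisymm (neg_nonneg.1 (hx_nonpos j)) (hx_nonneg j)

end IsOptimal
end Optimal

end IntegerProgram

theorem sparse_optimal_solution_general {ι κ M : Type*} [Fintype ι] [DecidableEq ι] [Fintype κ]
    [AddCommGroup M] [PartialOrder M] [IsOrderedAddMonoid M] (Δ : ℕ) (A : Matrix ι κ ℤ)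
    (hrank : A.rank = Fintype.card ι)
    (hub : ∀ g : ι → κ, Function.Injective g → |(A.submatrix id g).det| ≤ (Δ : ℤ))
    (b : ι → ℤ) (f : (κ → ℤ) →+ M) (hopt : ∃ z, IntegerProgram.IsOptimal A b f z) :
    ∃ z, IntegerProgram.IsOptimal A b f z ∧
      (Function.support z).ncard ≤ Fintype.card ι + ((Δ - 1) + 1) / 2 * (Δ - 1) := by
  obtain ⟨z, hz⟩ := exists_minimalFor_of_wellFoundedLT _ Function.support hopt
  exact ⟨z, hz.1, (IntegerProgram.IsOptimal.dissociated_support hz).ncard_le hrank hub⟩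

/-- Let `A ∈ ℤ^{m×n}` have full row rank with every `m×m` submatrix
having `|det| ≤ Δ`, and let `b ∈ ℤ^m`, `c ∈ ℤ^n`. If the integer program
`max{cᵀx : Ax = b, x ≥ 0, x ∈ ℤ^n}` has an optimal solution, then it has an optimal
solution `z*` with `|supp(z*)| ≤ m + ⌈(Δ−1)/2⌉·(Δ−1)`. -/
theorem sparse_optimal_solution (Δ m n : ℕ)
    (A : Matrix (Fin m) (Fin n) ℤ) (hrank : A.rank = m)
    (hub : ∀ g : Fin m → Fin n, Function.Injective g →
      |(A.submatrix id g).det| ≤ (Δ : ℤ))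
    (b : Fin m → ℤ) (c : Fin n → ℤ)
    (hopt : ∃ z : Fin n → ℤ, (A.mulVec z = b ∧ ∀ i, 0 ≤ z i) ∧
      ∀ x : Fin n → ℤ, A.mulVec x = b → (∀ i, 0 ≤ x i) → c ⬝ᵥ x ≤ c ⬝ᵥ z) :
    ∃ z : Fin n → ℤ, (A.mulVec z = b ∧ ∀ i, 0 ≤ z i) ∧
      (∀ x : Fin n → ℤ, A.mulVec x = b → (∀ i, 0 ≤ x i) → c ⬝ᵥ x ≤ c ⬝ᵥ z) ∧
      (Finset.univ.filter (fun i => z i ≠ 0)).card ≤ m + ((Δ - 1) + 1) / 2 * (Δ - 1) := by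
  obtain ⟨z, ⟨hfeasible, hmax⟩, hcard⟩ := sparse_optimal_solution_general Δ A
    (by rwa [Fintype.card_fin]) hub b (AddMonoidHom.mk' (c ⬝ᵥ ·) (dotProduct_add c)) hopt
  exact ⟨z, hfeasible, hmax, by simpa [← Set.ncard_coe_finset, Function.support] using hcard⟩
end

section
/- Let A ∈ ℤ^{m×n} have full row rank and let W ∈ ℤ^{n×(n−m)} have full column rank with A·W = 0. Then for every subset I ⊆ [n] with |I| = m one has (1/gcd(A))·|det A_{·,I}| = (1/gcd(W))·|det W_{Ī,·}|, where Ī = [n] \ I, A_{·,I} is the m×m submatrix of A with columns indexed by I, W_{Ī,·} is the (n−m)×(n−m) submatrix of W with rows indexed by Ī, and gcd(M) denotes the greatest common divisor of all determinants of maximal square submatrices (full rank subdeterminants) of M. -/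
/-!
Put `B = Wᵀ`, so that `A * Bᵀ = 0`. For all `m`-element column sets `I` and `J`, orthogonality gives
`det A_J * det B_Iᶜ = ± det A_I * det B_Jᶜ`. Taking the gcd over all `J` with `I` fixed yields
`gcd A * |det B_Iᶜ| = |det A_I| * gcd B`, and both gcds are nonzero because the ranks are full.
-/

open Matrix

variable {R l m n k : Type*}

section Rank

variable [CommRing R] [Fintype n]

theorem rank_map_algebraMap [Finite m] {S : Type*} [CommRing S] [Algebra R S] (p : Submonoid R)
    [IsLocalization p S] (hp : p ≤ nonZeroDivisors R) (A : Matrix m n R) :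
    (A.map (algebraMap R S)).rank = A.rank := by
  let f : (m → R) →ₗ[R] (m → S) := .pi fun i => Algebra.linearMap R S ∘ₗ .proj i
  have hcols : Set.range (A.map (algebraMap R S)).col = f '' Set.range A.col := by
    rw [← Set.range_comp]
    rfl
  rw [rank_eq_finrank_span_cols, rank_eq_finrank_span_cols, hcols, ← Submodule.localized'_span S p,
    IsLocalization.finrank_eq S p hp,
    IsLocalizedModule.finrank_eq p ((Submodule.span R (Set.range A.col)).toLocalized' S p f) hp]

theorem rank_transpose_of_isDomain [IsDomain R] [Fintype m] (A : Matrix m n R) :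
    Aᵀ.rank = A.rank := by
  rw [← rank_map_algebraMap (S := FractionRing R) (nonZeroDivisors R) le_rfl, transpose_map,
    rank_transpose, rank_map_algebraMap (nonZeroDivisors R) le_rfl]

theorem exists_det_submatrix_ne_zero_of_field {K : Type*} [Field K] [Fintype m]
    [DecidableEq m] {A : Matrix m n K} (hA : A.rank = Fintype.card m) :
    ∃ g : m ↪ n, (A.submatrix id g).det ≠ 0 := by
  obtain ⟨κ, a, ha, hspan, hli⟩ := exists_linearIndependent' K A.col
  have : Fintype κ := Fintype.ofInjective a ha
  have hκ : Fintype.card m = Fintype.card κ := by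
    rw [← hA, rank_eq_finrank_span_cols, ← hspan, finrank_span_eq_card hli]
  let σ : m ≃ κ := Fintype.equivOfCardEq hκ
  refine ⟨σ.toEmbedding.trans ⟨a, ha⟩, IsUnit.ne_zero ?_⟩
  rw [← isUnit_iff_isUnit_det, ← linearIndependent_cols_iff_isUnit]
  exact hli.comp σ σ.injective

theorem exists_det_submatrix_ne_zero [IsDomain R] [Fintype m] [DecidableEq m]
    {A : Matrix m n R} (hA : A.rank = Fintype.card m) :
    ∃ g : m ↪ n, (A.submatrix id g).det ≠ 0 := by
  rw [← rank_map_algebraMap (S := FractionRing R) (nonZeroDivisors R) le_rfl] at hA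
  obtain ⟨g, hg⟩ := exists_det_submatrix_ne_zero_of_field hA
  refine ⟨g, fun h => hg ?_⟩
  rw [submatrix_map, ← RingHom.mapMatrix_apply, ← RingHom.map_det, h, map_zero]

end Rank

section ComplementaryMinors

variable [CommRing R] [Fintype m] [DecidableEq m] [Fintype k] [DecidableEq k]

theorem det_fromRows_submatrix_one_right [DecidableEq n] (A : Matrix m n R) (e : m ⊕ k ≃ n) :
    ((fromRows A ((1 : Matrix n n R).submatrix (e ∘ Sum.inr) id)).submatrix id e).det =
      (A.submatrix id (e ∘ Sum.inl)).det := by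
  have hblocks : (fromRows A ((1 : Matrix n n R).submatrix (e ∘ Sum.inr) id)).submatrix id e =
      fromBlocks (A.submatrix id (e ∘ Sum.inl)) (A.submatrix id (e ∘ Sum.inr)) 0 1 := by
    ext (i | i) (j | j) <;> simp [one_apply]
  rw [hblocks, det_fromBlocks_zero₂₁, det_one, mul_one]

theorem det_fromRows_submatrix_one_left [DecidableEq n] (B : Matrix k n R) (e : m ⊕ k ≃ n) :
    ((fromRows ((1 : Matrix n n R).submatrix (e ∘ Sum.inl) id) B).submatrix id e).det =
      (B.submatrix id (e ∘ Sum.inr)).det := by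
  have hblocks : (fromRows ((1 : Matrix n n R).submatrix (e ∘ Sum.inl) id) B).submatrix id e =
      fromBlocks 1 0 (B.submatrix id (e ∘ Sum.inl)) (B.submatrix id (e ∘ Sum.inr)) := by
    ext (i | i) (j | j) <;> simp [one_apply]
  rw [hblocks, det_fromBlocks_zero₁₂, det_one, one_mul]

/- Multiply `A`, completed by the coordinate rows outside `e₁ ∘ inl`, with the transpose of `B`,
completed by the coordinate rows outside `e₂ ∘ inr`: orthogonality makes the product block
triangular, with the minors of `A` and `B` at the exchanged index sets on its diagonal. -/
theorem det_submatrix_mul_det_submatrix_of_mul_transpose_eq_zero [Fintype n]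
    {A : Matrix m n R} {B : Matrix k n R} (hAB : A * Bᵀ = 0) (e₁ e₂ : m ⊕ k ≃ n) :
    (A.submatrix id (e₂ ∘ Sum.inl)).det * (B.submatrix id (e₁ ∘ Sum.inr)).det =
      Equiv.Perm.sign (e₂.trans e₁.symm) *
        ((A.submatrix id (e₁ ∘ Sum.inl)).det * (B.submatrix id (e₂ ∘ Sum.inr)).det) := by
  classical
  let P := fromRows A ((1 : Matrix n n R).submatrix (e₁ ∘ Sum.inr) id)
  let Q := fromRows ((1 : Matrix n n R).submatrix (e₂ ∘ Sum.inl) id) B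
  have hblocks : P * Qᵀ = fromBlocks (A.submatrix id (e₂ ∘ Sum.inl)) 0
      ((1 : Matrix n n R).submatrix (e₁ ∘ Sum.inr) (e₂ ∘ Sum.inl))
      (B.submatrix id (e₁ ∘ Sum.inr))ᵀ := by
    simp only [P, Q, transpose_fromRows, fromRows_mul_fromCols, hAB]
    ext (i | i) (j | j) <;> simp [mul_apply, one_apply]
  have hperm : P.submatrix id e₂ = (P.submatrix id e₁).submatrix id (e₂.trans e₁.symm) := by
    ext
    simp
  calc (A.submatrix id (e₂ ∘ Sum.inl)).det * (B.submatrix id (e₁ ∘ Sum.inr)).det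
      = (P * Qᵀ).det := by rw [hblocks, det_fromBlocks_zero₁₂, det_transpose]
    _ = (P.submatrix id e₂).det * (Q.submatrix id e₂).det := by
      rw [← det_transpose (Q.submatrix id e₂), ← det_mul, transpose_submatrix, submatrix_mul_equiv,
        submatrix_id_id]
    _ = _ := by
      rw [hperm, det_permute', det_fromRows_submatrix_one_right,
        det_fromRows_submatrix_one_left, mul_assoc]

theorem associated_det_submatrix_mul_det_submatrix [Fintype n] {A : Matrix m n R}
    {B : Matrix k n R} (hAB : A * Bᵀ = 0) (e₁ e₂ : m ⊕ k ≃ n) :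
    Associated ((A.submatrix id (e₁ ∘ Sum.inl)).det * (B.submatrix id (e₂ ∘ Sum.inr)).det)
      ((B.submatrix id (e₁ ∘ Sum.inr)).det * (A.submatrix id (e₂ ∘ Sum.inl)).det) := by
  rw [mul_comm (B.submatrix _ _).det,
    det_submatrix_mul_det_submatrix_of_mul_transpose_eq_zero hAB e₁ e₂]
  obtain h | h := Int.units_eq_one_or (Equiv.Perm.sign (e₂.trans e₁.symm)) <;> simp [h]

end ComplementaryMinors

section MinorGcd

theorem surjective_embedding_trans_equiv [Finite m] (f : m ↪ l) (e₀ : l ≃ n) :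
    Function.Surjective fun e : l ≃ n => f.trans e.toEmbedding := by
  intro g
  obtain ⟨σ, hσ⟩ := Equiv.Perm.exists_extending_pair (e₀ ∘ f) g (e₀.injective.comp f.injective)
    g.injective
  exact ⟨e₀.trans σ, Function.Embedding.ext hσ⟩

variable [CommRing R] [Fintype m] [DecidableEq m] [Fintype n]

/-- The greatest common divisor of the maximal minors of a matrix with at most as many rows as
columns. Column sets are encoded as injections `m ↪ n`, so that each minor occurs once for every
ordering of its columns; the gcd does not depend on the resulting signs. -/
noncomputable def minorGcd [NormalizedGCDMonoid R] (A : Matrix m n R) : R :=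
  Finset.univ.gcd fun g : m ↪ n => (A.submatrix id g).det

theorem minorGcd_eq_gcd_equiv [NormalizedGCDMonoid R] [Fintype l] [DecidableEq l] [DecidableEq n]
    (A : Matrix m n R) (f : m ↪ l) (e₀ : l ≃ n) :
    minorGcd A = Finset.univ.gcd fun e : l ≃ n => (A.submatrix id (e ∘ f)).det := by
  classical
  rw [minorGcd, ← Finset.image_univ_of_surjective (surjective_embedding_trans_equiv f e₀),
    Finset.gcd_image]
  rfl

theorem normalize_minorGcd [NormalizedGCDMonoid R] (A : Matrix m n R) :
    normalize (minorGcd A) = minorGcd A :=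
  Finset.normalize_gcd

theorem minorGcd_ne_zero [NormalizedGCDMonoid R] [Nontrivial R] {A : Matrix m n R}
    (hA : A.rank = Fintype.card m) : minorGcd A ≠ 0 := by
  have : IsDomain R := {}
  simpa [minorGcd, Finset.gcd_ne_zero_iff] using exists_det_submatrix_ne_zero hA

variable [Fintype k] [DecidableEq k] {A : Matrix m n R} {B : Matrix k n R}

theorem associated_det_submatrix_mul_minorGcd [NormalizedGCDMonoid R] (hAB : A * Bᵀ = 0)
    (e : m ⊕ k ≃ n) :
    Associated ((A.submatrix id (e ∘ Sum.inl)).det * minorGcd B)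
      ((B.submatrix id (e ∘ Sum.inr)).det * minorGcd A) := by
  classical
  rw [minorGcd_eq_gcd_equiv B .inr e, minorGcd_eq_gcd_equiv A .inl e]
  have hminors := associated_det_submatrix_mul_det_submatrix hAB e
  exact (Finset.gcd_mul_left' _ _ _).symm.trans <| .trans
    (associated_of_dvd_dvd (Finset.gcd_mono_fun fun e' _ => (hminors e').dvd)
      (Finset.gcd_mono_fun fun e' _ => (hminors e').dvd'))
    (Finset.gcd_mul_left' _ _ _)

theorem orthogonal_lattices_general [StrongNormalizedGCDMonoid R] {K : Type*} [Field K]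
    [Algebra R K] [FaithfulSMul R K] (hA : A.rank = Fintype.card m) (hB : B.rank = Fintype.card k)
    (hAB : A * Bᵀ = 0) (e : m ⊕ k ≃ n) :
    algebraMap R K (normalize (A.submatrix id (e ∘ Sum.inl)).det) / algebraMap R K (minorGcd A) =
      algebraMap R K (normalize (B.submatrix id (e ∘ Sum.inr)).det) /
        algebraMap R K (minorGcd B) := by
  have : Nontrivial R := (algebraMap R K).domain_nontrivial
  have hinj := FaithfulSMul.algebraMap_injective R K
  rw [div_eq_div_iff ((map_ne_zero_iff _ hinj).mpr (minorGcd_ne_zero hA))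
    ((map_ne_zero_iff _ hinj).mpr (minorGcd_ne_zero hB)), ← map_mul, ← map_mul]
  congr 1
  simpa only [normalize_mul, normalize_minorGcd] using
    normalize_eq_normalize_iff_associated.mpr (associated_det_submatrix_mul_minorGcd hAB e)

end MinorGcd

/-- Let `A ∈ ℤ^{m×n}` have full row rank and `W ∈ ℤ^{n×(n−m)}` have
full column rank with `A·W = 0`. Then for every `I ⊆ [n]` with `|I| = m`,
`(1/gcd(A))·|det A_{·,I}| = (1/gcd(W))·|det W_{Ī,·}|`, where `gcd(M)` is the gcd of
all full-rank subdeterminants of `M`. -/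
theorem orthogonal_lattices (m n : ℕ) (hmn : m ≤ n)
    (A : Matrix (Fin m) (Fin n) ℤ) (hA : A.rank = m)
    (W : Matrix (Fin n) (Fin (n - m)) ℤ) (hW : W.rank = n - m)
    (hAW : A * W = 0)
    (I : Finset (Fin n)) (hI : I.card = m) :
    (|((A.submatrix id (fun j : Fin m => ((I.orderIsoOfFin hI j : Fin n)))).det : ℚ)|) /
        ((Finset.univ.gcd (fun g : Fin m ↪ Fin n => (A.submatrix id g).det) : ℤ) : ℚ) =
    (|((W.submatrix (fun i : Fin (n - m) =>
          ((Iᶜ.orderIsoOfFin (by simp [Finset.card_compl, hI]) i : Fin n))) id).det : ℚ)|) /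
        ((Finset.univ.gcd (fun g : Fin (n - m) ↪ Fin n => (W.submatrix g id).det) : ℤ) : ℚ) := by
  simpa [minorGcd, ← Int.abs_eq_normalize, ← transpose_submatrix, Function.comp_def] using!
    orthogonal_lattices_general (K := ℚ) (A := A) (B := Wᵀ) (by simpa using hA)
      (by simpa [rank_transpose_of_isDomain] using hW) hAW
      (finSumEquivOfFinset hI (by simp [Finset.card_compl, hI]))
end

section
/- Let A ∈ ℤ^{m×n} be a Δ-modular matrix of full column rank and let B be an n×n submatrix of A with |det B| = Δ. Let r_1, …, r_Δ be vectors such that each r_k equals a column of B^{−1} or the negative of a column of B^{−1}, coming from Δ pairwise distinct columns, and such that r_1 + … + r_Δ ∈ ℤ^n. Suppose that for each k ∈ [Δ−1] there is a row a_k of A with a_k^T r_k = 1, a_k^T r_{k+1} = −1, and a_k^T r_j = 0 for all j ∈ [Δ] \ {k, k+1}. Then ‖A(r_1 + … + r_Δ)‖_∞ ≤ 1. -/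
/-!
Let `B` be the given maximal submatrix. By Cramer's rule, a minor of `A * B⁻¹` of any size is the
quotient of a maximal minor of `A` by `det B`: replace rows of `B` by the chosen rows of `A`. Since
`|det B|` is maximal, all these minors have absolute value at most `1`, and so do the minors of the
matrix with columns `A r_k`, which are signed columns of `A * B⁻¹`. Stack the rows coming from
`a_1, …, a_{Δ-1}`, which are `e_k - e_{k+1}`, on top of an arbitrary row of that matrix: the
determinant of the resulting square matrix is the sum of its last row, that is, the corresponding
entry of `A (r_1 + … + r_Δ)`.
-/

open Matrix

section Determinants

variable {K ι κ μ : Type*} [CommRing K] [Fintype ι] [DecidableEq ι]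

theorem det_submatrix_eq_zero_of_not_injective_left (A : Matrix μ κ K) {f : ι → μ} (g : ι → κ)
    (hf : ¬ Function.Injective f) : (A.submatrix f g).det = 0 := by
  obtain ⟨i, j, hij, hne⟩ := Function.not_injective_iff.mp hf
  exact det_zero_of_row_eq hne (by ext l; simp [hij])

theorem det_submatrix_eq_zero_of_not_injective_right (A : Matrix μ κ K) (f : ι → μ) {g : ι → κ}
    (hg : ¬ Function.Injective g) : (A.submatrix f g).det = 0 := by
  rw [← det_transpose, transpose_submatrix]
  exact det_submatrix_eq_zero_of_not_injective_left Aᵀ f hg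

variable [Fintype κ] [DecidableEq κ]

theorem det_eq_det_submatrix_of_forall_notMem_range_row_eq_single (G : Matrix ι ι K) {σ : κ → ι}
    (hσ : Function.Injective σ) (hG : ∀ i ∉ Set.range σ, G i = Pi.single i 1) :
    G.det = (G.submatrix σ σ).det := by
  classical
  have hone : G.toSquareBlockProp (· ∉ Set.range σ) = 1 := by
    ext i j
    simp [toSquareBlockProp_def, hG i i.2, Pi.single_apply, one_apply, Subtype.ext_iff, eq_comm]
  have hzero : ∀ i ∉ Set.range σ, ∀ j ∈ Set.range σ, G i j = 0 := fun i hi j hj => by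
    rw [hG i hi, Pi.single_eq_of_ne (ne_of_mem_of_not_mem hj hi)]
  rw [twoBlockTriangular_det G (· ∈ Set.range σ) hzero, hone, det_one, mul_one]
  convert (det_submatrix_equiv_self (Equiv.ofInjective σ hσ)
    (G.toSquareBlockProp (· ∈ Set.range σ))).symm
  rfl

theorem det_submatrix_mul_inv (A : Matrix μ ι K) (R : ι → μ) (hR : IsUnit (A.submatrix R id).det)
    (a : κ → μ) {σ : κ → ι} (hσ : Function.Injective σ) :
    ((A * (A.submatrix R id)⁻¹).submatrix a σ).det =
      (A.submatrix (Function.extend σ a R) id).det * (A.submatrix R id)⁻¹.det := by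
  set B := A.submatrix R id
  set D := A.submatrix (Function.extend σ a R) id
  have hrow : ∀ i ∉ Set.range σ, (D * B⁻¹) i = Pi.single i 1 := fun i hi => by
    have hDB : D i = B i := by
      ext l
      simp [D, B, Function.extend_apply' a R i hi]
    calc (D * B⁻¹) i = (B * B⁻¹) i := by rw [mul_apply_eq_vecMul, mul_apply_eq_vecMul, hDB]
      _ = Pi.single i 1 := by
        rw [mul_nonsing_inv B hR]
        exact funext fun _ => one_eq_pi_single
  have hsub : (A * B⁻¹).submatrix a σ = (D * B⁻¹).submatrix σ σ := by
    ext k j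
    simp [D, mul_apply, hσ.extend_apply]
  rw [hsub, ← det_eq_det_submatrix_of_forall_notMem_range_row_eq_single _ hσ hrow, det_mul]

/-- Applying the adjugate to `M *ᵥ 1`, which vanishes outside its last entry, extracts the
determinant; the relevant adjugate entry is a unitriangular minor. -/
theorem det_eq_sum_last_row_of_consecutive_difference_rows {N : ℕ}
    (M : Matrix (Fin (N + 1)) (Fin (N + 1)) K)
    (hM : ∀ k : Fin N, M k.castSucc = Pi.single k.castSucc 1 - Pi.single k.succ 1) :
    M.det = ∑ j, M (Fin.last N) j := by
  set s := ∑ j, M (Fin.last N) j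
  have hsum : M *ᵥ 1 = Pi.single (Fin.last N) s := by
    ext i
    induction i using Fin.lastCases with
    | last => simp [mulVec, dotProduct_one, s]
    | cast k => simp [mulVec, dotProduct_one, hM]
  have hminor : (M.submatrix Fin.castSucc Fin.castSucc).det = 1 := by
    rw [det_of_isUpperTriangular]
    · simp [hM, Fin.ext_iff]
    · intro i j hij
      have hlt : j.castSucc < i.castSucc := hij
      simp [hM, hlt.ne, (hlt.trans Fin.castSucc_lt_succ).ne]
  have hadj : M.adjugate (Fin.last N) (Fin.last N) = 1 := by
    simp [adjugate_fin_succ_eq_det_submatrix, Fin.succAbove_last, hminor]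
  calc M.det = ((M.adjugate * M) *ᵥ 1) (Fin.last N) := by simp [adjugate_mul, smul_mulVec]
    _ = s := by rw [← mulVec_mulVec, hsum]; simp [mulVec, hadj]

end Determinants

theorem abs_sum_row_le_of_consecutive_difference_rows {K μ : Type*} [CommRing K] [LinearOrder K]
    {N : ℕ} (X : Matrix μ (Fin (N + 1)) K) {c : K}
    (hminor : ∀ a : Fin (N + 1) → μ, |(X.submatrix a id).det| ≤ c)
    (hrow : ∀ k : Fin N, ∃ i, X i = Pi.single k.castSucc 1 - Pi.single k.succ 1) (i : μ) :
    |∑ j, X i j| ≤ c := by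
  choose g hg using hrow
  have hdet : (X.submatrix (Fin.snoc g i : Fin (N + 1) → μ) id).det = ∑ j, X i j := by
    rw [det_eq_sum_last_row_of_consecutive_difference_rows]
    · simp
    · intro k
      rw [← hg]
      ext j
      simp
  exact hdet ▸ hminor _

theorem eq_single_sub_single {ι K : Type*} [DecidableEq ι] [AddGroup K] [One K] {v : ι → K}
    {i j : ι} (hij : i ≠ j) (hi : v i = 1) (hj : v j = -1)
    (hv : ∀ l, l ≠ i → l ≠ j → v l = 0) : v = Pi.single i 1 - Pi.single j 1 := by
  ext l
  by_cases hli : l = i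
  · simp [hli, hi, hij]
  by_cases hlj : l = j
  · simp [hlj, hj, hij.symm]
  · simp [hli, hlj, hv]

section LinearOrderedField

variable {K ι μ : Type*} [Field K] [LinearOrder K] [IsStrictOrderedRing K]
  [Fintype ι] [DecidableEq ι]

theorem abs_det_submatrix_mul_inv_le_one {κ : Type*} [Fintype κ] [DecidableEq κ]
    (A : Matrix μ ι K) (R : ι → μ) (hdet : (A.submatrix R id).det ≠ 0)
    (hmax : ∀ f : ι → μ, Function.Injective f →
      |(A.submatrix f id).det| ≤ |(A.submatrix R id).det|)
    (a : κ → μ) (σ : κ → ι) : |((A * (A.submatrix R id)⁻¹).submatrix a σ).det| ≤ 1 := by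
  by_cases hσ : Function.Injective σ
  · rw [det_submatrix_mul_inv A R hdet.isUnit a hσ, det_nonsing_inv, Ring.inverse_eq_inv', abs_mul,
      abs_inv, ← div_eq_mul_inv, div_le_one (abs_pos.mpr hdet)]
    by_cases hf : Function.Injective (Function.extend σ a R)
    · exact hmax _ hf
    · simp [det_submatrix_eq_zero_of_not_injective_left A id hf]
  · simp [det_submatrix_eq_zero_of_not_injective_right _ a hσ]

theorem sum_vector_short_general {N : ℕ}
    (A : Matrix μ ι K) (R : ι → μ) (hdet : (A.submatrix R id).det ≠ 0)
    (hmax : ∀ f : ι → μ, Function.Injective f →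
      |(A.submatrix f id).det| ≤ |(A.submatrix R id).det|)
    (r : Fin N → ι → K) (σ : Fin N → ι) (ε : Fin N → K) (hε : ∀ k, |ε k| = 1)
    (hr : ∀ k l, r k l = ε k * (A.submatrix R id)⁻¹ l (σ k))
    (hrows : ∀ (k : ℕ) (hk : k + 1 < N), ∃ i,
      A i ⬝ᵥ r ⟨k, by omega⟩ = 1 ∧ A i ⬝ᵥ r ⟨k + 1, hk⟩ = -1 ∧
      ∀ j : Fin N, (j : ℕ) ≠ k → (j : ℕ) ≠ k + 1 → A i ⬝ᵥ r j = 0) (i : μ) :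
    |(A *ᵥ ∑ k, r k) i| ≤ 1 := by
  obtain _ | N := N
  · simp
  let X : Matrix μ (Fin (N + 1)) K := of fun i j => A i ⬝ᵥ r j
  have hminor (a : Fin (N + 1) → μ) : |(X.submatrix a id).det| ≤ 1 := by
    have hX : X.submatrix a id =
        of fun k j => ε j * (A * (A.submatrix R id)⁻¹).submatrix a σ k j := by
      ext k j
      simp [X, mul_apply, dotProduct, hr, Finset.mul_sum, mul_left_comm]
    rw [hX, det_mul_row, abs_mul, Finset.abs_prod, Finset.prod_eq_one fun k _ => hε k, one_mul]
    exact abs_det_submatrix_mul_inv_le_one A R hdet hmax a σ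
  have hrow (k : Fin N) : ∃ i, X i = Pi.single k.castSucc 1 - Pi.single k.succ 1 := by
    obtain ⟨i, hone, hneg, hzero⟩ := hrows k (by omega)
    exact ⟨i, eq_single_sub_single Fin.castSucc_lt_succ.ne hone hneg fun j hj hj' =>
      hzero j (fun h => hj (Fin.ext h)) (fun h => hj' (Fin.ext h))⟩
  rw [mulVec_sum, Finset.sum_apply]
  exact abs_sum_row_le_of_consecutive_difference_rows X hminor hrow i

end LinearOrderedField

/-- Let `A ∈ ℤ^{m×n}` be `Δ`-modular of full column rank and let
`B = A_R` be an `n×n` submatrix with `|det B| = Δ`. Let `r_1, …, r_Δ` be signed,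
pairwise distinct columns of `B⁻¹` with `r_1 + … + r_Δ ∈ ℤ^n`. Suppose for each
`k ∈ [Δ−1]` there is a row `a_k` of `A` with `a_kᵀ r_k = 1`, `a_kᵀ r_{k+1} = −1` and
`a_kᵀ r_j = 0` for all other `j`. Then `‖A(r_1 + … + r_Δ)‖_∞ ≤ 1`. -/
theorem sum_vector_short (Δ m n : ℕ)
    (A : Matrix (Fin m) (Fin n) ℤ) (hrank : A.rank = n)
    (hub : ∀ f : Fin n → Fin m, Function.Injective f →
      |(A.submatrix f id).det| ≤ (Δ : ℤ))
    (hattain : ∃ f : Fin n → Fin m, Function.Injective f ∧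
      |(A.submatrix f id).det| = (Δ : ℤ))
    (R : Fin n → Fin m) (hR : Function.Injective R)
    (hBdet : |(A.submatrix R id).det| = (Δ : ℤ))
    (r : Fin Δ → Fin n → ℚ)
    (σ : Fin Δ → Fin n) (hσ : Function.Injective σ)
    (ε : Fin Δ → ℚ) (hε : ∀ k, ε k = 1 ∨ ε k = -1)
    (hr : ∀ (k : Fin Δ) (l : Fin n),
      r k l = ε k * (((A.submatrix R id).map (Int.cast : ℤ → ℚ))⁻¹) l (σ k))
    (hsum : ∀ l : Fin n, ∃ a : ℤ, (∑ k, r k l) = (a : ℚ))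
    (hrows : ∀ (k : ℕ) (hk : k + 1 < Δ), ∃ i0 : Fin m,
      (∑ l, (A i0 l : ℚ) * r ⟨k, by omega⟩ l) = 1 ∧
      (∑ l, (A i0 l : ℚ) * r ⟨k + 1, hk⟩ l) = -1 ∧
      (∀ j : Fin Δ, (j : ℕ) ≠ k → (j : ℕ) ≠ k + 1 →
        (∑ l, (A i0 l : ℚ) * r j l) = 0)) :
    ∀ i0 : Fin m, |∑ l, (A i0 l : ℚ) * (∑ k, r k l)| ≤ 1 := by
  obtain rfl | hΔ := Nat.eq_zero_or_pos Δ
  · simp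
  have hcast (f : Fin n → Fin m) : (((A.map Int.cast).submatrix f id).det : ℚ) =
      (A.submatrix f id).det := (Int.cast_det _).symm
  intro i
  have hshort := sum_vector_short_general (A.map (Int.cast : ℤ → ℚ)) R
    (by rw [hcast, Int.cast_ne_zero, ← abs_pos, hBdet]; exact_mod_cast hΔ)
    (fun f hf => by rw [hcast, hcast]; exact_mod_cast (hub f hf).trans_eq hBdet.symm)
    r σ ε (fun k => (abs_eq zero_le_one).mpr (hε k)) hr hrows i
  simpa [mulVec, dotProduct] using hshort
end
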